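/- arXiv:2601.14312 — 4 statements merged into one kernel-verified Lean document; each statement's English description precedes it below -/
import Mathlib

section
/- For each integer n ≥ 1 define V_n = (8/n²) · ∫₀^{π/2} (sin^{2n+1}(u)/cos(u)) · ( ∫_u^{π/2} (1 − sin^{2n}(s))² / (sin^{2n−1}(s)·cos(s)) ds ) du. Then n²·V_n converges to π²/6 as n → ∞; equivalently V_n = π²/(6n²) + o(1/n²). -/
open Real Filter

open MeasureTheory Set in
theorem aux_K_hasSum (b : ℝ) (hb : 0 < b) :
    HasSum (fun k : ℕ => 2 / ((2 * k + 2).factorial : ℝ) * b ^ (2 * k + 1))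
      ((2 * cosh b - 2) / b) := by
  have h := Real.hasSum_cosh b
  have h1 := (hasSum_nat_add_iff' 1).mpr h
  have h2 := h1.mul_left (2 / b)
  simp at h2
  have e1 : (2 * cosh b - 2) / b = 2 / b * (cosh b - 1) := by ring
  rw [e1]
  have e2 : (fun k : ℕ => 2 / ((2 * k + 2).factorial : ℝ) * b ^ (2 * k + 1)) =
      fun i : ℕ => 2 / b * (b ^ (2 * (i + 1)) / ((2 * (i + 1)).factorial : ℝ)) := by
    funext k
    have : 2 * (k + 1) = 2 * k + 2 := by ring
    rw [this]
    field_simp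
    ring
  rw [e2]
  exact h2

open MeasureTheory Set in
theorem aux_pow_int (a : ℝ) (ha : 0 < a) (m : ℕ) :
    IntegrableOn (fun b : ℝ => b ^ m) (Ioo 0 a) ∧
      ∫ b in Ioo 0 a, b ^ m = a ^ (m + 1) / (m + 1) := by
  constructor
  · exact ((continuous_pow m).integrableOn_Icc).mono_set Ioo_subset_Icc_self
  · rw [← integral_Ioc_eq_integral_Ioo, ← intervalIntegral.integral_of_le ha.le, integral_pow]
    simp

theorem aux_summable (a : ℝ) :
    Summable (fun k : ℕ => 2 / ((2 * k + 2).factorial : ℝ) * (a ^ (2 * k + 2) / (2 * k + 2))) := by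
  have h := (hasSum_nat_add_iff' 1).mpr (Real.hasSum_cosh a)
  refine Summable.of_nonneg_of_le (fun k => ?_) (fun k => ?_) h.summable
  · have : a ^ (2 * k + 2) = (a ^ (k + 1)) ^ 2 := by ring
    rw [this]; positivity
  · have e : 2 * (k + 1) = 2 * k + 2 := by ring
    have : a ^ (2 * k + 2) = (a ^ (k + 1)) ^ 2 := by ring
    rw [e, this]
    have hk : (0:ℝ) ≤ k := Nat.cast_nonneg k
    have hf : (0:ℝ) < ((2 * k + 2).factorial : ℝ) := by positivity
    have : 2 / ((2 * k + 2).factorial : ℝ) * ((a ^ (k + 1)) ^ 2 / (2 * k + 2))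
      = ((a ^ (k + 1)) ^ 2 / ((2 * k + 2).factorial : ℝ)) * (1 / (k + 1)) := by
      field_simp
    rw [this]
    refine mul_le_of_le_one_right (by positivity) ?_
    rw [div_le_one (by positivity)]; linarith

open MeasureTheory Set in
theorem aux_H_hasSum (a : ℝ) (ha : 0 < a) :
    HasSum (fun k : ℕ => 2 / ((2 * k + 2).factorial : ℝ) * (a ^ (2 * k + 2) / (2 * k + 2)))
      (∫ b in Ioo 0 a, (2 * cosh b - 2) / b) := by
  have hi : ∀ k : ℕ, ∫ b in Ioo 0 a, 2 / ((2 * k + 2).factorial : ℝ) * b ^ (2 * k + 1)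
      = 2 / ((2 * k + 2).factorial : ℝ) * (a ^ (2 * k + 2) / (2 * k + 2)) := by
    intro k
    rw [integral_const_mul, (aux_pow_int a ha (2 * k + 1)).2]
    push_cast
    ring_nf
  have hn : ∀ k : ℕ, ∫ b in Ioo 0 a, ‖2 / ((2 * k + 2).factorial : ℝ) * b ^ (2 * k + 1)‖
      = 2 / ((2 * k + 2).factorial : ℝ) * (a ^ (2 * k + 2) / (2 * k + 2)) := by
    intro k
    rw [← hi]
    refine setIntegral_congr_fun measurableSet_Ioo (fun b hb => ?_)
    have := hb.1
    exact Real.norm_of_nonneg (by positivity)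
  have h := hasSum_integral_of_summable_integral_norm (μ := volume.restrict (Ioo 0 a))
    (F := fun (k : ℕ) (b : ℝ) => 2 / ((2 * k + 2).factorial : ℝ) * b ^ (2 * k + 1))
    (fun k => ((aux_pow_int a ha (2 * k + 1)).1).const_mul _)
    (by simp_rw [hn]; exact aux_summable a)
  simp_rw [hi] at h
  have e : ∫ b in Ioo 0 a, (2 * cosh b - 2) / b = ∫ b in Ioo 0 a,
      ∑' k : ℕ, 2 / ((2 * k + 2).factorial : ℝ) * b ^ (2 * k + 1) := by
    refine setIntegral_congr_fun measurableSet_Ioo (fun b hb => ?_)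
    exact (aux_K_hasSum b hb.1).tsum_eq.symm
  rw [e]
  exact h

open MeasureTheory Set in
theorem aux_K_int (a : ℝ) (ha : 0 < a) :
    IntegrableOn (fun b => (2 * cosh b - 2) / b) (Ioo 0 a) := by
  apply Integrable.of_integral_ne_zero
  have h := aux_H_hasSum a ha
  have := h.summable.tsum_pos (fun k => by positivity) 0 (by positivity)
  rw [h.tsum_eq] at this
  exact this.ne'

open MeasureTheory Set in
theorem aux_gamma (m : ℕ) :
    IntegrableOn (fun a : ℝ => exp (-a) * a ^ m) (Ioi 0) ∧
      ∫ a in Ioi (0:ℝ), exp (-a) * a ^ m = m.factorial := by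
  have h1 := Real.GammaIntegral_convergent (s := (m:ℝ) + 1) (by positivity)
  have h2 := Real.Gamma_eq_integral (s := (m:ℝ) + 1) (by positivity)
  rw [Real.Gamma_nat_eq_factorial] at h2
  simp only [add_sub_cancel_right, Real.rpow_natCast] at h1 h2
  exact ⟨h1, h2.symm⟩

open MeasureTheory Set in
theorem aux_outer :
    ∫ a in Ioi (0:ℝ), exp (-a) * (1 / a) * ∫ b in Ioo 0 a, (2 * cosh b - 2) / b = π ^ 2 / 12 := by
  have hi : ∀ k : ℕ, ∫ a in Ioi (0:ℝ), (2 / ((2 * k + 2).factorial : ℝ) / (2 * k + 2)) *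
      (exp (-a) * a ^ (2 * k + 1)) = (1 / 2) * (1 / ((k + 1 : ℕ) : ℝ) ^ 2) := by
    intro k
    rw [integral_const_mul, (aux_gamma (2 * k + 1)).2, Nat.factorial_succ (2 * k + 1)]
    have hf : ((2 * k + 1).factorial : ℝ) ≠ 0 := by positivity
    push_cast
    field_simp
    ring
  have hn : ∀ k : ℕ, ∫ a in Ioi (0:ℝ), ‖(2 / ((2 * k + 2).factorial : ℝ) / (2 * k + 2)) *
      (exp (-a) * a ^ (2 * k + 1))‖ = (1 / 2) * (1 / ((k + 1 : ℕ) : ℝ) ^ 2) := by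
    intro k
    rw [← hi]
    refine setIntegral_congr_fun measurableSet_Ioi (fun b hb => ?_)
    have : 0 < b := hb
    exact Real.norm_of_nonneg (by positivity)
  have hz := ((hasSum_nat_add_iff' 1).mpr hasSum_zeta_two).mul_left (1 / 2)
  have h := hasSum_integral_of_summable_integral_norm (μ := volume.restrict (Ioi (0:ℝ)))
    (F := fun (k : ℕ) (a : ℝ) => (2 / ((2 * k + 2).factorial : ℝ) / (2 * k + 2)) *
      (exp (-a) * a ^ (2 * k + 1)))
    (fun k => ((aux_gamma (2 * k + 1)).1).const_mul _)
    (by simp_rw [hn]; exact hz.summable)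
  simp_rw [hi] at h
  have h3 := h.unique hz
  have h4 : π ^ 2 / 12 = 1 / 2 * (π ^ 2 / 6 - ∑ i ∈ Finset.range 1, 1 / (i : ℝ) ^ 2) := by
    simp; ring
  rw [h4, ← h3]
  refine setIntegral_congr_fun measurableSet_Ioi (fun a ha => ?_)
  have ha : 0 < a := ha
  have := ((aux_H_hasSum a ha).mul_left (exp (-a) * (1 / a))).tsum_eq
  rw [← this]
  congr 1
  funext k
  field_simp
  ring

open MeasureTheory Set in
theorem aux_outer_int :
    IntegrableOn (fun a => exp (-a) * (1 / a) * ∫ b in Ioo 0 a, (2 * cosh b - 2) / b)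
      (Ioi (0:ℝ)) := by
  apply Integrable.of_integral_ne_zero
  rw [aux_outer]
  positivity

/-- Regularised kernel. -/
noncomputable def phiK (n : ℕ) (a : ℝ) : ℝ := 1 / (n * (exp (a / n) - 1))

theorem phiK_nonneg (n : ℕ) (a : ℝ) (ha : 0 < a) : 0 ≤ phiK n a := by
  unfold phiK
  have : 1 ≤ exp (a / n) := Real.one_le_exp (by positivity)
  have : 0 ≤ exp (a / n) - 1 := by linarith
  positivity

theorem phiK_le (n : ℕ) (a : ℝ) (ha : 0 < a) : phiK n a ≤ 1 / a := by
  unfold phiK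
  rcases Nat.eq_zero_or_pos n with h | h
  · subst h; simp; exact ha.le
  have hn : (0:ℝ) < n := by exact_mod_cast h
  apply one_div_le_one_div_of_le ha
  have := Real.add_one_le_exp (a / n)
  calc a = n * (a / n) := by field_simp
    _ ≤ _ := by apply mul_le_mul_of_nonneg_left _ hn.le; linarith

theorem phiK_meas (n : ℕ) : Measurable (phiK n) := by
  unfold phiK
  fun_prop

theorem phiK_tendsto (a : ℝ) (ha : 0 < a) :
    Tendsto (fun n : ℕ => phiK n a) atTop (nhds (1 / a)) := by
  unfold phiK
  refine Tendsto.div tendsto_const_nhds ?_ ha.ne'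
  have h0 : HasDerivAt (fun t : ℝ => exp (a * t)) a 0 := by
    have := ((hasDerivAt_id (0:ℝ)).const_mul a).exp
    simpa using this
  have h1 := h0.tendsto_slope
  have h2 : Tendsto (fun n : ℕ => ((n:ℝ))⁻¹) atTop (nhdsWithin 0 {0}ᶜ) := by
    refine tendsto_nhdsWithin_iff.mpr ⟨tendsto_inv_atTop_nhds_zero_nat, ?_⟩
    filter_upwards [eventually_gt_atTop 0] with n hn
    simp; omega
  refine (h1.comp h2).congr (fun n => ?_)
  simp [slope_def_field, div_eq_mul_inv, mul_comm]

/-- Inner integral. -/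
noncomputable def HK (n : ℕ) (a : ℝ) : ℝ :=
  ∫ b in Set.Ioo 0 a, (2 * cosh b - 2) * phiK n b

open MeasureTheory Set in
theorem HK_int (n : ℕ) (a : ℝ) (ha : 0 < a) :
    IntegrableOn (fun b => (2 * cosh b - 2) * phiK n b) (Ioo 0 a) := by
  refine Integrable.mono' (aux_K_int a ha) ?_ ?_
  · exact (((measurable_cosh.const_mul 2).sub_const 2).mul (phiK_meas n)).aestronglyMeasurable
  · refine (ae_restrict_iff' measurableSet_Ioo).mpr (Eventually.of_forall fun b hb => ?_)
    have h1 := Real.one_le_cosh b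
    rw [Real.norm_of_nonneg (mul_nonneg (by linarith) (phiK_nonneg n b hb.1)), div_eq_mul_one_div]
    exact mul_le_mul_of_nonneg_left (phiK_le n b hb.1) (by linarith)

open MeasureTheory Set in
theorem HK_nonneg (n : ℕ) (a : ℝ) : 0 ≤ HK n a := by
  refine setIntegral_nonneg measurableSet_Ioo (fun b hb => ?_)
  have h1 := Real.one_le_cosh b
  exact mul_nonneg (by linarith) (phiK_nonneg n b hb.1)

open MeasureTheory Set in
theorem HK_le (n : ℕ) (a : ℝ) (ha : 0 < a) :
    HK n a ≤ ∫ b in Ioo 0 a, (2 * cosh b - 2) / b := by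
  refine setIntegral_mono_on (HK_int n a ha) (aux_K_int a ha) measurableSet_Ioo (fun b hb => ?_)
  have h1 := Real.one_le_cosh b
  rw [div_eq_mul_one_div]
  exact mul_le_mul_of_nonneg_left (phiK_le n b hb.1) (by linarith)

open MeasureTheory Set in
theorem HK_tendsto (a : ℝ) (ha : 0 < a) :
    Tendsto (fun n : ℕ => HK n a) atTop (nhds (∫ b in Ioo 0 a, (2 * cosh b - 2) / b)) := by
  unfold HK
  refine tendsto_integral_of_dominated_convergence (fun b => (2 * cosh b - 2) / b) ?_
    (aux_K_int a ha) ?_ ?_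
  · intro n; exact (HK_int n a ha).aestronglyMeasurable
  · intro n
    refine (ae_restrict_iff' measurableSet_Ioo).mpr (Eventually.of_forall fun b hb => ?_)
    have h1 := Real.one_le_cosh b
    rw [Real.norm_of_nonneg (mul_nonneg (by linarith) (phiK_nonneg n b hb.1)), div_eq_mul_one_div]
    exact mul_le_mul_of_nonneg_left (phiK_le n b hb.1) (by linarith)
  · refine (ae_restrict_iff' measurableSet_Ioo).mpr (Eventually.of_forall fun b hb => ?_)
    rw [div_eq_mul_one_div]
    exact (phiK_tendsto b hb.1).const_mul _

open MeasureTheory Set in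
theorem HK_mono (n : ℕ) : MonotoneOn (HK n) (Ioi 0) := by
  intro a _ b hb hab
  refine setIntegral_mono_set (HK_int n b hb) ?_ (Ioo_subset_Ioo_right hab).eventuallyLE
  refine (ae_restrict_iff' measurableSet_Ioo).mpr (Eventually.of_forall fun b hb => ?_)
  have h1 := Real.one_le_cosh b
  exact mul_nonneg (by linarith) (phiK_nonneg n b hb.1)

open MeasureTheory Set in
theorem outer_tendsto :
    Tendsto (fun n : ℕ => ∫ a in Ioi (0:ℝ), exp (-a) * phiK n a * HK n a) atTop
      (nhds (π ^ 2 / 12)) := by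
  rw [← aux_outer]
  refine tendsto_integral_of_dominated_convergence
    (fun a => exp (-a) * (1 / a) * ∫ b in Ioo 0 a, (2 * cosh b - 2) / b) ?_ aux_outer_int ?_ ?_
  · intro n
    refine AEMeasurable.aestronglyMeasurable (AEMeasurable.mul ?_ ?_)
    · exact ((measurable_exp.comp measurable_neg).mul (phiK_meas n)).aemeasurable
    · exact aemeasurable_restrict_of_monotoneOn measurableSet_Ioi (HK_mono n)
  · intro n
    refine (ae_restrict_iff' measurableSet_Ioi).mpr (Eventually.of_forall fun a ha => ?_)
    have ha : 0 < a := ha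
    have h1 := phiK_nonneg n a ha
    have h2 := HK_nonneg n a
    rw [Real.norm_of_nonneg (by positivity)]
    have := phiK_le n a ha
    have := HK_le n a ha
    gcongr
  · refine (ae_restrict_iff' measurableSet_Ioi).mpr (Eventually.of_forall fun a ha => ?_)
    exact ((phiK_tendsto a ha).const_mul _).mul (HK_tendsto a ha)

/-- The change of variables. -/
noncomputable def gK (n : ℕ) (u : ℝ) : ℝ := -(2 * n * Real.log (Real.sin u))

theorem gK_deriv (n : ℕ) (u : ℝ) (h0 : 0 < u) (h1 : u < π / 2) :
    HasDerivAt (gK n) (-(2 * n * (Real.cos u / Real.sin u))) u := by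
  have hs : 0 < Real.sin u := Real.sin_pos_of_pos_of_lt_pi h0 (by linarith)
  exact (((Real.hasDerivAt_sin u).log hs.ne').const_mul _).neg

theorem gK_anti (n : ℕ) (hn : 1 ≤ n) : StrictAntiOn (gK n) (Set.Ioc 0 (π / 2)) := by
  intro u hu v hv huv
  have hn' : (0:ℝ) < n := by exact_mod_cast hn
  have hs : 0 < Real.sin u := Real.sin_pos_of_pos_of_lt_pi hu.1 (by linarith [hu.2, Real.pi_pos])
  have h : Real.sin u < Real.sin v :=
    Real.sin_lt_sin_of_lt_of_le_pi_div_two (by linarith [hu.1, Real.pi_pos]) hv.2 huv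
  have := Real.log_lt_log hs h
  unfold gK
  have := mul_lt_mul_of_pos_left this (by positivity : (0:ℝ) < 2 * n)
  linarith

theorem gK_half (n : ℕ) : gK n (π / 2) = 0 := by simp [gK]

theorem gK_surj (n : ℕ) (hn : 1 ≤ n) (a : ℝ) (ha : 0 < a) :
    ∃ u ∈ Set.Ioo 0 (π / 2), gK n u = a := by
  have hn' : (0:ℝ) < n := by exact_mod_cast hn
  have h1 : exp (-(a / (2 * n))) < 1 := by
    rw [Real.exp_lt_one_iff]
    have : 0 < a / (2 * n) := by positivity
    linarith
  have h0 := exp_pos (-(a / (2 * n)))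
  refine ⟨Real.arcsin (exp (-(a / (2 * n)))), ⟨Real.arcsin_pos.mpr h0, Real.arcsin_lt_pi_div_two.mpr h1⟩, ?_⟩
  unfold gK
  rw [Real.sin_arcsin (by linarith) h1.le, Real.log_exp]
  field_simp

theorem gK_image (n : ℕ) (hn : 1 ≤ n) : gK n '' Set.Ioo 0 (π / 2) = Set.Ioi 0 := by
  ext a
  constructor
  · rintro ⟨u, hu, rfl⟩
    rw [Set.mem_Ioi, ← gK_half n]
    exact gK_anti n hn ⟨hu.1, hu.2.le⟩ ⟨by positivity, le_rfl⟩ hu.2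
  · intro ha
    obtain ⟨u, hu, h⟩ := gK_surj n hn a ha
    exact ⟨u, hu, h⟩

theorem gK_image' (n : ℕ) (hn : 1 ≤ n) (u : ℝ) (hu : u ∈ Set.Ioo 0 (π / 2)) :
    gK n '' Set.Ioo u (π / 2) = Set.Ioo 0 (gK n u) := by
  ext a
  constructor
  · rintro ⟨v, hv, rfl⟩
    have hv0 : 0 < v := hu.1.trans hv.1
    refine ⟨?_, gK_anti n hn ⟨hu.1, hu.2.le⟩ ⟨hv0, hv.2.le⟩ hv.1⟩
    rw [← gK_half n]
    exact gK_anti n hn ⟨hv0, hv.2.le⟩ ⟨by positivity, le_rfl⟩ hv.2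
  · intro ha
    obtain ⟨v, hv, rfl⟩ := gK_surj n hn a ha.1
    refine ⟨v, ⟨?_, hv.2⟩, rfl⟩
    exact ((gK_anti n hn).lt_iff_gt ⟨hv.1, hv.2.le⟩ ⟨hu.1, hu.2.le⟩).mp ha.2

theorem gK_exp (n : ℕ) (u : ℝ) (hu : u ∈ Set.Ioo 0 (π / 2)) :
    exp (-gK n u) = Real.sin u ^ (2 * n) := by
  have hs : 0 < Real.sin u := Real.sin_pos_of_pos_of_lt_pi hu.1 (by linarith [hu.2, Real.pi_pos])
  have : -gK n u = ((2 * n : ℕ) : ℝ) * Real.log (Real.sin u) := by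
    unfold gK; push_cast; ring
  rw [this, Real.exp_nat_mul, Real.exp_log hs]

theorem gK_phi (n : ℕ) (hn : 1 ≤ n) (u : ℝ) (hu : u ∈ Set.Ioo 0 (π / 2)) :
    phiK n (gK n u) = Real.sin u ^ 2 / (n * Real.cos u ^ 2) := by
  have hn' : (0:ℝ) < n := by exact_mod_cast hn
  have hs : 0 < Real.sin u := Real.sin_pos_of_pos_of_lt_pi hu.1 (by linarith [hu.2, Real.pi_pos])
  have hc : 0 < Real.cos u := Real.cos_pos_of_mem_Ioo ⟨by linarith [hu.1, Real.pi_pos], hu.2⟩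
  have : gK n u / n = -(((2 : ℕ) : ℝ) * Real.log (Real.sin u)) := by
    unfold gK; push_cast; field_simp
  unfold phiK
  rw [this, Real.exp_neg, Real.exp_nat_mul, Real.exp_log hs]
  have h2 : (Real.sin u ^ 2)⁻¹ - 1 = Real.cos u ^ 2 / Real.sin u ^ 2 := by
    rw [Real.cos_sq']; field_simp
  rw [h2]
  field_simp

open MeasureTheory Set in
theorem gK_inner (n : ℕ) (hn : 1 ≤ n) (u : ℝ) (hu : u ∈ Set.Ioo 0 (π / 2)) :
    HK n (gK n u) = 2 * ∫ s in u..(π/2),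
          (1 - Real.sin s ^ (2*n))^2 / (Real.sin s ^ (2*n - 1) * Real.cos s) := by
  have hn' : (0:ℝ) < n := by exact_mod_cast hn
  unfold HK
  rw [← gK_image' n hn u hu, integral_image_eq_integral_abs_deriv_smul measurableSet_Ioo
    (f' := fun u => -(2 * n * (Real.cos u / Real.sin u)))
    (fun v hv => (gK_deriv n v (hu.1.trans hv.1) hv.2).hasDerivWithinAt)
    (((gK_anti n hn).mono (fun v hv => ⟨hu.1.trans hv.1, hv.2.le⟩)).injOn),
    intervalIntegral.integral_of_le hu.2.le, integral_Ioc_eq_integral_Ioo, ← integral_const_mul]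
  refine setIntegral_congr_fun measurableSet_Ioo (fun v hv => ?_)
  have hv' : v ∈ Ioo 0 (π / 2) := ⟨hu.1.trans hv.1, hv.2⟩
  have hs : 0 < Real.sin v := Real.sin_pos_of_pos_of_lt_pi hv'.1 (by linarith [hv.2, Real.pi_pos])
  have hc : 0 < Real.cos v := Real.cos_pos_of_mem_Ioo ⟨by linarith [hv'.1, Real.pi_pos], hv.2⟩
  simp only [smul_eq_mul]
  rw [gK_phi n hn v hv', Real.cosh_eq, gK_exp n v hv', abs_neg, abs_of_nonneg (by positivity)]
  have h1 : exp (gK n v) = (Real.sin v ^ (2 * n))⁻¹ := by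
    rw [← gK_exp n v hv', Real.exp_neg, inv_inv]
  obtain ⟨m, rfl⟩ : ∃ m, n = m + 1 := ⟨n - 1, by omega⟩
  have e1 : 2 * (m + 1) - 1 = 2 * m + 1 := by omega
  have e2 : Real.sin v ^ (2 * (m + 1)) = Real.sin v ^ (2 * m + 1) * Real.sin v := by ring
  rw [h1, e1, e2]
  have hp : 0 < Real.sin v ^ (2 * m + 1) := by positivity
  generalize Real.sin v ^ (2 * m + 1) = p at *
  field_simp
  ring

open MeasureTheory Set in
theorem gK_outer (n : ℕ) (hn : 1 ≤ n) :
    ∫ a in Ioi (0:ℝ), exp (-a) * phiK n a * HK n a =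
      4 * ∫ u in (0:ℝ)..(π/2), (Real.sin u ^ (2*n + 1) / Real.cos u) *
        ∫ s in u..(π/2),
          (1 - Real.sin s ^ (2*n))^2 / (Real.sin s ^ (2*n - 1) * Real.cos s) := by
  have hn' : (0:ℝ) < n := by exact_mod_cast hn
  rw [← gK_image n hn, integral_image_eq_integral_abs_deriv_smul measurableSet_Ioo
    (f' := fun u => -(2 * n * (Real.cos u / Real.sin u)))
    (fun v hv => (gK_deriv n v hv.1 hv.2).hasDerivWithinAt)
    (((gK_anti n hn).mono (fun v hv => ⟨hv.1, hv.2.le⟩)).injOn),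
    intervalIntegral.integral_of_le (by positivity), integral_Ioc_eq_integral_Ioo,
    ← integral_const_mul]
  refine setIntegral_congr_fun measurableSet_Ioo (fun v hv => ?_)
  have hs : 0 < Real.sin v := Real.sin_pos_of_pos_of_lt_pi hv.1 (by linarith [hv.2, Real.pi_pos])
  have hc : 0 < Real.cos v := Real.cos_pos_of_mem_Ioo ⟨by linarith [hv.1, Real.pi_pos], hv.2⟩
  simp only [smul_eq_mul]
  rw [gK_phi n hn v hv, gK_inner n hn v hv, gK_exp n v hv, abs_neg, abs_of_nonneg (by positivity)]
  generalize (∫ s in v..(π/2),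
          (1 - Real.sin s ^ (2*n))^2 / (Real.sin s ^ (2*n - 1) * Real.cos s)) = J
  field_simp
  ring

theorem cp_variance_asymptotics
    (V : ℕ → ℝ)
    (hV : ∀ n : ℕ, 1 ≤ n → V n = (8 / (n:ℝ)^2) *
      ∫ u in (0:ℝ)..(π/2), (Real.sin u ^ (2*n + 1) / Real.cos u) *
        ∫ s in u..(π/2),
          (1 - Real.sin s ^ (2*n))^2 / (Real.sin s ^ (2*n - 1) * Real.cos s)) :
    Tendsto (fun n : ℕ => (n:ℝ)^2 * V n) atTop (nhds (π^2 / 6)) := by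
  have h := outer_tendsto.const_mul 2
  have e : 2 * (π ^ 2 / 12) = π ^ 2 / 6 := by ring
  rw [e] at h
  refine h.congr' ?_
  filter_upwards [eventually_ge_atTop 1] with n hn
  have hn' : (0:ℝ) < n := by exact_mod_cast hn
  rw [gK_outer n hn, hV n hn]
  field_simp
  ring
end

section
/- For each integer n ≥ 1 define V_n = 8·(2n(2n+1))^{−2} · ∫₀^{π/2} (sin^{4n+1}(u)·(2n·cos²(u) + 1)² / cos³(u)) · ( ∫_u^{π/2} (1 − sin^{4n}(s)·(2n·cos²(s) + 1))² / (sin^{4n−1}(s)·cos³(s)) ds ) du. Then (2n+1)²·V_n converges, as n → ∞, to N := 2 ∫₀^{∞} ∫₀^{x} e^{y−x} · ((x+1)²/x²) · ((1 − e^{−y}(y+1))²/y²) dy dx, and this double integral N is finite. -/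
open Real Filter MeasureTheory Set

theorem core_bound (x y a : ℝ) (hy : 0 < y) (hxy : y ≤ x) (ha0 : 0 ≤ a) (ha1 : a ≤ 1)
    (ha2 : a ≤ y^2) : (x+1)^2/x^2 * (a^2/y^2) ≤ 8 * (1+y^2)⁻¹ := by
  have hx : 0 < x := by linarith
  have h1 : (x+1)^2/x^2 ≤ (y+1)^2/y^2 := by
    rw [← div_pow, ← div_pow]
    apply pow_le_pow_left₀ (by positivity)
    rw [div_le_div_iff₀ hx hy]; nlinarith
  have h2 : (y+1)^2/y^2 * (a^2/y^2) ≤ 8 * (1+y^2)⁻¹ := by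
    rw [div_mul_div_comm, ← div_eq_mul_inv, div_le_div_iff₀ (by positivity) (by positivity)]
    rcases le_total y 1 with h | h
    · have e1 : a^2 ≤ y^2*y^2 := by nlinarith
      have e2 : (y+1)^2 * (1+y^2) ≤ 8 := by
        have : (y+1)^2 ≤ 4 := by nlinarith
        have : 1+y^2 ≤ 2 := by nlinarith
        nlinarith [sq_nonneg (y+1)]
      calc (y+1)^2*a^2*(1+y^2) = ((y+1)^2*(1+y^2)) * a^2 := by ring
        _ ≤ 8 * (y^2*y^2) := by gcongr
    · have e1 : a^2 ≤ 1 := by nlinarith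
      have e2 : (y+1)^2 ≤ 4*y^2 := by nlinarith
      have e3 : 1+y^2 ≤ 2*y^2 := by nlinarith
      calc (y+1)^2*a^2*(1+y^2) ≤ (4*y^2)*1*(2*y^2) := by gcongr
        _ = 8 * (y^2*y^2) := by ring
  exact (mul_le_mul_of_nonneg_right h1 (by positivity)).trans h2

noncomputable def GB (p : ℝ × ℝ) : ℝ :=
  (8 * (1+p.2^2)⁻¹) * (Ici (0:ℝ)).indicator (fun z => Real.exp (-z)) (p.1 - p.2)

theorem GB_int : Integrable GB (volume : Measure (ℝ × ℝ)) := by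
  have h1 : Integrable (fun y : ℝ => 8 * (1+y^2)⁻¹) volume := integrable_inv_one_add_sq.const_mul 8
  have h2 : Integrable ((Ici (0:ℝ)).indicator (fun z => Real.exp (-z))) volume := by
    rw [integrable_indicator_iff measurableSet_Ici, integrableOn_Ici_iff_integrableOn_Ioi]
    simpa using exp_neg_integrableOn_Ioi 0 one_pos
  exact h1.convolution_integrand (ContinuousLinearMap.mul ℝ ℝ) h2

theorem GB_eq (x y : ℝ) (h : y ≤ x) : GB (x,y) = (8 * (1+y^2)⁻¹) * Real.exp (y-x) := by
  simp [GB, h]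

theorem a_bounds (n : ℕ) (hn : 1 ≤ n) (y : ℝ) (hy : 0 ≤ y) (hyn : y ≤ 2*n) :
    0 ≤ 1 - (1 - y/(2*n))^(2*n)*(y+1) ∧ 1 - (1 - y/(2*n))^(2*n)*(y+1) ≤ 1 ∧
    1 - (1 - y/(2*n))^(2*n)*(y+1) ≤ y^2 := by
  have hn' : (1:ℝ) ≤ n := by exact_mod_cast hn
  have hle : y/(2*n) ≤ 1 := by rw [div_le_one (by positivity)]; exact hyn
  have h0 : 0 ≤ (1 - y/(2*n))^(2*n) := pow_nonneg (by linarith) _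
  have h1 : (1 - y/(2*n))^(2*n) ≤ Real.exp (-y) := by
    have := Real.one_sub_div_pow_le_exp_neg (n := 2*n) (t := y) (by push_cast; exact hyn)
    push_cast at this; exact this
  have h2 : 1 - y ≤ (1 - y/(2*n))^(2*n) := by
    have := one_add_mul_le_pow (a := -(y/(2*n))) (by linarith) (2*n)
    push_cast at this
    have e : (2*(n:ℝ)) * -(y/(2*n)) = -y := by field_simp
    rw [e] at this
    simpa [sub_eq_add_neg] using this
  have h3 : Real.exp (-y) * (y+1) ≤ 1 := by
    rw [Real.exp_neg, inv_mul_le_iff₀ (Real.exp_pos _)]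
    simpa using Real.add_one_le_exp y
  refine ⟨?_, ?_, ?_⟩
  · nlinarith
  · nlinarith
  · nlinarith

theorem ratio_bound (n : ℕ) (hn : 1 ≤ n) (x y : ℝ) (hy : 0 ≤ y) (hxy : y ≤ x) (hxn : x < 2*n) :
    (1 - x/(2*n))^(2*n) / (1 - y/(2*n))^(2*n) ≤ Real.exp (y-x) := by
  have hn' : (1:ℝ) ≤ n := by exact_mod_cast hn
  have hm : (0:ℝ) < 2*n := by positivity
  have hx1 : x/(2*n) < 1 := by rw [div_lt_one hm]; exact hxn
  have hy1 : y/(2*n) < 1 := by rw [div_lt_one hm]; linarith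
  rw [← div_pow]
  have h : (1 - x/(2*n)) / (1 - y/(2*n)) ≤ Real.exp ((y-x)/(2*n)) := by
    refine le_trans ?_ (Real.add_one_le_exp _)
    rw [div_le_iff₀ (by linarith)]
    have : ((y-x)/(2*n) + 1) * (1 - y/(2*n)) - (1 - x/(2*n)) = (x-y)/(2*n) * (y/(2*n)) := by ring
    have : 0 ≤ (x-y)/(2*n) * (y/(2*n)) := by
      apply mul_nonneg <;> apply div_nonneg <;> linarith
    linarith
  calc _ ≤ Real.exp ((y-x)/(2*n)) ^ (2*n) := by
        apply pow_le_pow_left₀ (div_nonneg (by linarith) (by linarith)) h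
    _ = _ := by
        rw [← Real.exp_nat_mul]; congr 1; push_cast; field_simp

theorem subst_lem (m u : ℝ) (hm : 0 < m) (hu0 : 0 ≤ u) (hu1 : u < π/2) (g : ℝ → ℝ) :
    ∫ y in Ioo 0 (m * Real.cos u^2), g y =
      ∫ s in Ioo u (π/2), (2*m*Real.cos s*Real.sin s) * g (m * Real.cos s^2) := by
  have hd : ∀ s ∈ Ioo u (π/2), HasDerivWithinAt (fun s => m * Real.cos s^2)
      (-(2*m*Real.cos s*Real.sin s)) (Ioo u (π/2)) s := by
    intro s _
    have := (((Real.hasDerivAt_cos s).pow 2).const_mul m).hasDerivWithinAt (s := Ioo u (π/2))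
    have e : -(2*m*Real.cos s*Real.sin s) = m * (((2:ℕ):ℝ) * Real.cos s ^ (2 - 1) * -Real.sin s) := by
      norm_num; ring
    rw [e]
    exact this
  have hanti : StrictAntiOn (fun s => m * Real.cos s^2) (Icc u (π/2)) := by
    intro a ha b hb hab
    have h1 : Real.cos b < Real.cos a := Real.strictAntiOn_cos ⟨by linarith [ha.1], by linarith [ha.2, pi_pos]⟩ ⟨by linarith [hb.1], by linarith [hb.2, pi_pos]⟩ hab
    have h2 : 0 ≤ Real.cos b := Real.cos_nonneg_of_mem_Icc ⟨by linarith [hb.1, pi_pos], hb.2⟩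
    have : Real.cos b^2 < Real.cos a^2 := by nlinarith
    exact mul_lt_mul_of_pos_left this hm
  have himg : (fun s => m * Real.cos s^2) '' Ioo u (π/2) = Ioo 0 (m * Real.cos u^2) := by
    apply Subset.antisymm
    · rintro _ ⟨s, hs, rfl⟩
      have h1 := hanti (left_mem_Icc.2 hu1.le) (Ioo_subset_Icc_self hs) hs.1
      have h2 := hanti (Ioo_subset_Icc_self hs) (right_mem_Icc.2 hu1.le) hs.2
      simp only [Real.cos_pi_div_two] at h2
      exact ⟨by simpa using h2, h1⟩
    · have := intermediate_value_Ioo' hu1.le (f := fun s => m * Real.cos s^2) (by fun_prop)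
      simpa using this
  rw [← himg, integral_image_eq_integral_abs_deriv_smul measurableSet_Ioo hd
    (hanti.injOn.mono Ioo_subset_Icc_self)]
  apply setIntegral_congr_fun measurableSet_Ioo
  intro s hs
  have h1 : 0 < Real.cos s := Real.cos_pos_of_mem_Ioo ⟨by linarith [hs.1, pi_pos], hs.2⟩
  have h2 : 0 < Real.sin s := Real.sin_pos_of_pos_of_lt_pi (by linarith [hs.1]) (by linarith [hs.2, pi_pos])
  simp only [abs_neg, smul_eq_mul]
  rw [abs_of_pos (by positivity)]

noncomputable def Gn (n : ℕ) (x y : ℝ) : ℝ :=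
  (1 - x/(2*n))^(2*n) / (1 - y/(2*n))^(2*n) * ((x+1)^2/x^2) *
    ((1 - (1 - y/(2*n))^(2*n)*(y+1))^2/y^2)

theorem V_eq (n : ℕ) (hn : 1 ≤ n) :
  (2*(n:ℝ)+1)^2 * (8 / ((2*(n:ℝ)) * (2*(n:ℝ) + 1))^2 *
      ∫ u in (0:ℝ)..(π/2),
        (Real.sin u ^ (4*n + 1) * (2*n * Real.cos u ^ 2 + 1)^2 / Real.cos u ^ 3) *
          ∫ s in u..(π/2),
            (1 - Real.sin s ^ (4*n) * (2*n * Real.cos s ^ 2 + 1))^2 /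
              (Real.sin s ^ (4*n - 1) * Real.cos s ^ 3)) =
   2 * ∫ x in Ioo (0:ℝ) (2*n), ∫ y in Ioo 0 x, Gn n x y := by
  have hn' : (1:ℝ) ≤ n := by exact_mod_cast hn
  have hm : (0:ℝ) < 2*n := by positivity
  have hpi := pi_pos
  have hs2 : ∀ s : ℝ, (1 - (2*n * Real.cos s^2)/(2*n))^(2*n) = Real.sin s^(4*n) := by
    intro s
    rw [mul_div_cancel_left₀ _ hm.ne', ← Real.sin_sq, ← pow_mul]; congr 1; ring
  have hE := subst_lem (2*n) 0 hm le_rfl (by linarith) (fun x => ∫ y in Ioo 0 x, Gn n x y)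
  simp only [Real.cos_zero, one_pow, mul_one] at hE
  rw [hE, intervalIntegral.integral_of_le (by linarith), integral_Ioc_eq_integral_Ioo,
    ← integral_const_mul, ← integral_const_mul, ← integral_const_mul]
  apply setIntegral_congr_fun measurableSet_Ioo
  intro u hu
  have hcu : 0 < Real.cos u := Real.cos_pos_of_mem_Ioo ⟨by linarith [hu.1], hu.2⟩
  have hsu : 0 < Real.sin u := Real.sin_pos_of_pos_of_lt_pi (by linarith [hu.1]) (by linarith [hu.2])
  simp only
  rw [subst_lem (2*n) u hm hu.1.le hu.2, intervalIntegral.integral_of_le hu.2.le,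
    integral_Ioc_eq_integral_Ioo, ← integral_const_mul, ← integral_const_mul,
    ← integral_const_mul, ← integral_const_mul, ← integral_const_mul]
  apply setIntegral_congr_fun measurableSet_Ioo
  intro s hs
  have hcs : 0 < Real.cos s := Real.cos_pos_of_mem_Ioo ⟨by linarith [hs.1, hu.1], hs.2⟩
  have hss : 0 < Real.sin s := Real.sin_pos_of_pos_of_lt_pi (by linarith [hs.1, hu.1]) (by linarith [hs.2])
  simp only [Gn, hs2]
  have e1 : Real.sin s^(4*n) = Real.sin s^(4*n-1) * Real.sin s := by
    rw [← pow_succ]; congr 1; omega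
  generalize 1 - Real.sin s ^ (4*n) * (2*n * Real.cos s ^ 2 + 1) = A
  rw [e1, pow_succ]
  generalize Real.sin s^(4*n-1) = P at *
  have hP : P ≠ 0 := by
    rintro rfl
    rw [zero_mul] at e1
    exact (pow_pos hss _).ne' e1
  field_simp
  try ring

theorem meas_Gn (n : ℕ) : Measurable (fun p : ℝ × ℝ => Gn n p.1 p.2) := by
  unfold Gn; fun_prop

def T : Set (ℝ × ℝ) := {p | 0 < p.2 ∧ p.2 < p.1}
theorem T_meas : MeasurableSet T :=
  (measurableSet_lt measurable_const measurable_snd).inter (measurableSet_lt measurable_snd measurable_fst)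

theorem iter_eq (S : Set ℝ) (hS : MeasurableSet S) (hS0 : S ⊆ Ioi 0) (f : ℝ → ℝ → ℝ)
   (hf : Integrable ((T ∩ Prod.fst ⁻¹' S).indicator (fun p : ℝ × ℝ => f p.1 p.2)) volume) :
   ∫ p, (T ∩ Prod.fst ⁻¹' S).indicator (fun p : ℝ × ℝ => f p.1 p.2) p =
     ∫ x in S, ∫ y in Ioo 0 x, f x y := by
  rw [Measure.volume_eq_prod] at hf ⊢
  rw [integral_prod _ hf, ← integral_indicator hS]
  congr 1; ext x
  by_cases hx : x ∈ S
  · rw [indicator_of_mem hx, ← integral_indicator measurableSet_Ioo]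
    congr 1; ext y
    simp only [indicator, T, mem_inter_iff, mem_ofPred_eq, mem_preimage, hx, and_true, mem_Ioo]
  · rw [indicator_of_notMem hx]
    simp [indicator, hx]

theorem hp_variance_asymptotics
    (V : ℕ → ℝ)
    (hV : ∀ n : ℕ, 1 ≤ n → V n = 8 / ((2*(n:ℝ)) * (2*(n:ℝ) + 1))^2 *
      ∫ u in (0:ℝ)..(π/2),
        (Real.sin u ^ (4*n + 1) * (2*n * Real.cos u ^ 2 + 1)^2 / Real.cos u ^ 3) *
          ∫ s in u..(π/2),
            (1 - Real.sin s ^ (4*n) * (2*n * Real.cos s ^ 2 + 1))^2 /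
              (Real.sin s ^ (4*n - 1) * Real.cos s ^ 3))
    (F : ℝ → ℝ → ℝ)
    (hF : ∀ x y, F x y =
      Real.exp (y - x) * ((x + 1)^2 / x^2) * ((1 - Real.exp (-y) * (y + 1))^2 / y^2))
    (N : ℝ)
    (hN : N = 2 * ∫ x in Ioi (0:ℝ), ∫ y in (0:ℝ)..x, F x y) :
    IntegrableOn (fun p : ℝ × ℝ => F p.1 p.2) {p : ℝ × ℝ | 0 ≤ p.2 ∧ p.2 ≤ p.1} volume ∧
      Tendsto (fun n : ℕ => (2*(n:ℝ) + 1)^2 * V n) atTop (nhds N) := by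
  have hFm : Measurable (fun p : ℝ × ℝ => F p.1 p.2) := by
    simp only [hF]; fun_prop
  have hFb : ∀ x y, 0 ≤ y → y ≤ x → ‖F x y‖ ≤ GB (x,y) := by
    intro x y hy hxy
    rw [GB_eq x y hxy, hF]
    rcases hy.eq_or_lt with rfl | hy
    · simp; positivity
    rw [Real.norm_of_nonneg (by positivity), mul_assoc, mul_comm (8 * _)]
    apply mul_le_mul_of_nonneg_left _ (Real.exp_pos _).le
    have h3 : Real.exp (-y) * (y+1) ≤ 1 := by
      rw [Real.exp_neg, inv_mul_le_iff₀ (Real.exp_pos _)]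
      simpa using Real.add_one_le_exp y
    have h4 := Real.add_one_le_exp (-y)
    have h5 := Real.exp_pos (-y)
    apply core_bound x y _ hy hxy <;> nlinarith
  have hD : MeasurableSet {p : ℝ × ℝ | 0 ≤ p.2 ∧ p.2 ≤ p.1} :=
    (measurableSet_le measurable_const measurable_snd).inter
      (measurableSet_le measurable_snd measurable_fst)
  have hI : IntegrableOn (fun p : ℝ × ℝ => F p.1 p.2) {p : ℝ × ℝ | 0 ≤ p.2 ∧ p.2 ≤ p.1} volume := by
    apply Integrable.mono' GB_int.integrableOn hFm.aestronglyMeasurable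
    filter_upwards [ae_restrict_mem hD] with p hp
    exact hFb p.1 p.2 hp.1 hp.2
  refine ⟨hI, ?_⟩
  have hGB0 : ∀ p, 0 ≤ GB p := fun p => by
    unfold GB
    exact mul_nonneg (by positivity) (indicator_nonneg (fun z _ => (Real.exp_pos _).le) _)
  have hGb : ∀ n : ℕ, 1 ≤ n → ∀ p : ℝ × ℝ, 
      ‖(T ∩ Prod.fst ⁻¹' (Ioo (0:ℝ) (2*n))).indicator (fun p : ℝ × ℝ => Gn n p.1 p.2) p‖ ≤ GB p := by
    intro n hn p
    by_cases hp : p ∈ T ∩ Prod.fst ⁻¹' (Ioo (0:ℝ) (2*n))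
    · rw [indicator_of_mem hp]
      obtain ⟨x, y⟩ := p
      obtain ⟨⟨hy, hxy⟩, hx0, hxn⟩ := hp
      simp only at hy hxy hx0 hxn ⊢
      have hm : (0:ℝ) < 2*n := by linarith
      have hx1 : x/(2*n) < 1 := by rw [div_lt_one hm]; exact hxn
      have hy1 : y/(2*n) < 1 := by rw [div_lt_one hm]; linarith
      obtain ⟨a0, a1, a2⟩ := a_bounds n hn y hy.le (by linarith)
      have hr := ratio_bound n hn x y hy.le hxy.le hxn
      have hc := core_bound x y _ hy hxy.le a0 a1 a2
      have hr0 : 0 ≤ (1 - x/(2*n))^(2*n) / (1 - y/(2*n))^(2*n) :=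
        div_nonneg (pow_nonneg (by linarith) _) (pow_nonneg (by linarith) _)
      rw [GB_eq x y hxy.le, Gn, mul_assoc, mul_comm (8 * _)]
      rw [Real.norm_of_nonneg (mul_nonneg hr0 (by positivity))]
      exact mul_le_mul hr hc (by positivity) (Real.exp_pos _).le
    · rw [indicator_of_notMem hp]; simpa using hGB0 p
  have hmeasn : ∀ n : ℕ, AEStronglyMeasurable ((T ∩ Prod.fst ⁻¹' (Ioo (0:ℝ) (2*n))).indicator (fun p : ℝ × ℝ => Gn n p.1 p.2)) (volume : Measure (ℝ × ℝ)) := fun n =>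
    ((meas_Gn n).indicator (T_meas.inter (measurable_fst measurableSet_Ioo))).aestronglyMeasurable
  have hVn : ∀ n : ℕ, 1 ≤ n → (2*(n:ℝ) + 1)^2 * V n = 2 * ∫ p, (T ∩ Prod.fst ⁻¹' (Ioo (0:ℝ) (2*n))).indicator (fun p : ℝ × ℝ => Gn n p.1 p.2) p := by
    intro n hn
    rw [hV n hn, V_eq n hn, iter_eq _ measurableSet_Ioo (fun x hx => hx.1)]
    exact GB_int.mono' (hmeasn n) (Eventually.of_forall (hGb n hn))
  have hN' : N = 2 * ∫ p, (T ∩ Prod.fst ⁻¹' (Ioi (0:ℝ))).indicator (fun p : ℝ × ℝ => F p.1 p.2) p := by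
    rw [hN, iter_eq _ measurableSet_Ioi subset_rfl]
    · congr 1
      apply setIntegral_congr_fun measurableSet_Ioi
      intro x hx
      simp only
      rw [intervalIntegral.integral_of_le (le_of_lt hx), integral_Ioc_eq_integral_Ioo]
    · rw [integrable_indicator_iff (T_meas.inter (measurable_fst measurableSet_Ioi))]
      exact hI.mono_set (fun p hp => ⟨hp.1.1.le, hp.1.2.le⟩)
  rw [hN']
  have hlim : Tendsto (fun n : ℕ => ∫ p, (T ∩ Prod.fst ⁻¹' (Ioo (0:ℝ) (2*n))).indicator (fun p : ℝ × ℝ => Gn n p.1 p.2) p) atTop (nhds (∫ p, (T ∩ Prod.fst ⁻¹' (Ioi (0:ℝ))).indicator (fun p : ℝ × ℝ => F p.1 p.2) p)) := by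
    apply tendsto_integral_filter_of_dominated_convergence GB (Eventually.of_forall hmeasn) _ GB_int
    · refine Eventually.of_forall ?_
      rintro ⟨x, y⟩
      by_cases hp : (x,y) ∈ T
      · have hx0 : 0 < x := lt_trans hp.1 hp.2
        rw [indicator_of_mem (show (x,y) ∈ T ∩ Prod.fst ⁻¹' (Ioi (0:ℝ)) from ⟨hp, hx0⟩)]
        have hpow : ∀ t : ℝ, Tendsto (fun n : ℕ => (1 - t/(2*n))^(2*n)) atTop (nhds (Real.exp (-t))) := by
          intro t
          have h2 : Tendsto (fun n : ℕ => 2*n) atTop atTop :=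
            tendsto_id.const_mul_atTop' two_pos
          have := (Real.tendsto_one_add_div_pow_exp (-t)).comp h2
          refine this.congr (fun n => ?_)
          simp only [Function.comp]
          push_cast
          congr 1; ring
        have hG : Tendsto (fun n : ℕ => Gn n x y) atTop (nhds (F x y)) := by
          have e : F x y = Real.exp (-x) / Real.exp (-y) * ((x + 1)^2 / x^2) * ((1 - Real.exp (-y) * (y + 1))^2 / y^2) := by
            rw [hF, ← Real.exp_sub]; congr 3; ring
          rw [e]
          unfold Gn
          exact (((hpow x).div (hpow y) (Real.exp_pos _).ne').mul_const _).mul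
            (((((hpow y).mul_const _).const_sub 1).pow 2).div_const _)
        refine hG.congr' ?_
        have h2 : ∀ᶠ n : ℕ in atTop, x < n := tendsto_natCast_atTop_atTop.eventually_gt_atTop x
        filter_upwards [h2] with n hn
        rw [indicator_of_mem]
        exact ⟨hp, hx0, by simp only; linarith⟩
      · have : ∀ S : Set ℝ, ∀ f : ℝ × ℝ → ℝ, (T ∩ Prod.fst ⁻¹' S).indicator f (x,y) = 0 :=
          fun S f => indicator_of_notMem (fun h => hp h.1) _
        simp only [this]
        exact tendsto_const_nhds
    · filter_upwards [eventually_ge_atTop 1] with n hn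
      exact Eventually.of_forall (hGb n hn)
  refine (hlim.const_mul 2).congr' ?_
  filter_upwards [eventually_ge_atTop 1] with n hn
  exact (hVn n hn).symm
end

section
/- The triple integral of e^{−h₁²/2}·e^{−h₂²/2}·e^{x²/2} over the region { (h₁, h₂, x) ∈ ℝ³ : 0 ≤ x ≤ h₁ and x ≤ h₂ } is finite and equals √(2π)·ln(2)/2. -/
open Real MeasureTheory

namespace KtildeAux

open Set Filter Topology

lemma lint_scale (g : ℝ → ENNReal) (hg : Measurable g) (a : ℝ) (ha : 0 < a) :
    ∫⁻ x, g x = ENNReal.ofReal a * ∫⁻ r, g (a * r) := by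
  conv_lhs => rw [← Real.smul_map_volume_mul_left ha.ne']
  rw [lintegral_smul_measure, lintegral_map hg (by fun_prop), abs_of_pos ha, smul_eq_mul]

lemma gauss_int (c : ℝ) (hc : 0 < c) :
    ∫⁻ h in Ioi (0:ℝ), ENNReal.ofReal (h^2 * Real.exp (-(c/2) * h^2))
      = ENNReal.ofReal (√(2*π) / 2 * (c * √c)⁻¹) := by
  have hi := integrableOn_rpow_mul_exp_neg_mul_rpow (p := 2) (s := 2) (b := c/2)
    (by norm_num) (by norm_num) (by positivity)
  have hv := integral_rpow_mul_exp_neg_mul_rpow (p := 2) (q := 2) (b := c/2)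
    (by norm_num) (by norm_num) (by positivity)
  simp only [Real.rpow_two] at hi hv
  rw [← ofReal_integral_eq_lintegral_ofReal hi (ae_of_all _ fun x => by positivity), hv]
  congr 1
  have h1 : Real.Gamma ((2+1)/2) = √π / 2 := by
    rw [show ((2:ℝ)+1)/2 = 1/2 + 1 by norm_num, Real.Gamma_add_one (by norm_num),
      Real.Gamma_one_half_eq]; ring
  have h2 : (c/2) ^ (-((2:ℝ)+1)/2) = ((c/2) * √(c/2))⁻¹ := by
    rw [show (-((2:ℝ)+1)/2) = -(1 + 1/2) by norm_num, Real.rpow_neg (by positivity),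
      Real.rpow_add (by positivity), Real.rpow_one, Real.sqrt_eq_rpow]
  rw [h1, h2, Real.sqrt_div hc.le, Real.sqrt_mul (by norm_num)]
  have : √c ≠ 0 := by positivity
  have h3 : √2 ≠ 0 := by positivity
  field_simp

lemma w_int (r : ℝ) (h0 : 0 ≤ r) (h1 : r < 1) :
    ∫⁻ w in Ioi r, ENNReal.ofReal (((1 + w^2 - r^2) * √(1 + w^2 - r^2))⁻¹)
      = ENNReal.ofReal ((1 + r)⁻¹) := by
  have hk : 0 < 1 - r^2 := by nlinarith
  have hpos : ∀ w : ℝ, 0 < 1 + w^2 - r^2 := fun w => by nlinarith [sq_nonneg w]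
  let F : ℝ → ℝ := fun w => w / √(1 + w^2 - r^2) / (1 - r^2)
  have hd : ∀ w, HasDerivAt F (((1 + w^2 - r^2) * √(1 + w^2 - r^2))⁻¹) w := by
    intro w
    have ha : HasDerivAt (fun w : ℝ => 1 + w^2 - r^2) (2*w) w := by
      simpa using ((hasDerivAt_pow 2 w).const_add 1).sub_const (r^2)
    have hb := ha.sqrt (hpos w).ne'
    have hs : 0 < √(1 + w^2 - r^2) := Real.sqrt_pos.2 (hpos w)
    have hq : √(1 + w^2 - r^2)^2 = 1 + w^2 - r^2 := Real.sq_sqrt (hpos w).le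
    refine (((hasDerivAt_id w).div hb hs.ne').div_const (1 - r^2)).congr_deriv ?_
    have := hpos w
    simp only [id]
    rw [hq]
    field_simp
    rw [hq]; ring
  have hlim : Tendsto F atTop (𝓝 (1 / (1 - r^2))) := by
    have hl : Tendsto (fun w : ℝ => 1 / √(1 + (1 - r^2) / w^2) / (1 - r^2)) atTop
        (𝓝 (1 / (1 - r^2))) := by
      have : Tendsto (fun w : ℝ => (1 - r^2) / w^2) atTop (𝓝 0) :=
        Tendsto.div_atTop tendsto_const_nhds (tendsto_pow_atTop two_ne_zero)
      have h2 := (((this.const_add 1).sqrt).inv₀ (by simp)).div_const (1 - r^2)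
      simpa using h2
    refine hl.congr' ?_
    filter_upwards [eventually_gt_atTop 0] with w hw
    have : 1 + w^2 - r^2 = w^2 * (1 + (1 - r^2)/w^2) := by field_simp; ring
    have h3 : 0 < √(1 + (1 - r^2) / w^2) := by positivity
    simp only [F]
    rw [this, Real.sqrt_mul (by positivity), Real.sqrt_sq hw.le]
    field_simp
  have hnn : ∀ w : ℝ, 0 ≤ ((1 + w^2 - r^2) * √(1 + w^2 - r^2))⁻¹ := fun w => by
    have := hpos w; positivity
  have hi := integrableOn_Ioi_deriv_of_nonneg' (a := r) (fun w _ => hd w) (fun w _ => hnn w) hlim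
  have hv := integral_Ioi_of_hasDerivAt_of_nonneg' (a := r) (fun w _ => hd w)
    (fun w _ => hnn w) hlim
  rw [← ofReal_integral_eq_lintegral_ofReal hi (ae_of_all _ hnn), hv]
  congr 1
  simp only [F]
  rw [show 1 + r^2 - r^2 = 1 by ring, Real.sqrt_one]
  have : 1 + r ≠ 0 := by positivity
  rw [show 1 - r^2 = (1 + r) * (1 - r) by ring]
  have : 1 - r ≠ 0 := by linarith
  field_simp

lemma r_int : ∫⁻ r in Ioo (0:ℝ) 1, ENNReal.ofReal ((1 + r)⁻¹) = ENNReal.ofReal (Real.log 2) := by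
  have hc : ContinuousOn (fun r : ℝ => (1 + r)⁻¹) (Icc 0 1) :=
    ContinuousOn.inv₀ (by fun_prop) (fun r hr => by have := hr.1; positivity)
  have hi : IntegrableOn (fun r : ℝ => (1 + r)⁻¹) (Ioo 0 1) :=
    hc.integrableOn_Icc.mono_set Ioo_subset_Icc_self
  rw [← ofReal_integral_eq_lintegral_ofReal hi]
  · congr 1
    rw [← integral_Ioc_eq_integral_Ioo, ← intervalIntegral.integral_of_le zero_le_one,
      intervalIntegral.integral_comp_add_left (fun x => x⁻¹)]
    rw [integral_inv_of_pos (by norm_num) (by norm_num)]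
    norm_num
  · filter_upwards [ae_restrict_mem measurableSet_Ioo] with r hr
    have := hr.1
    simp only [Pi.zero_apply]
    positivity

def S : Set (ℝ × ℝ × ℝ) := {p | 0 ≤ p.2.2 ∧ p.2.2 ≤ p.1 ∧ p.2.2 ≤ p.2.1}

noncomputable def f (p : ℝ × ℝ × ℝ) : ℝ :=
  Real.exp (-p.1^2/2) * Real.exp (-p.2.1^2/2) * Real.exp (p.2.2^2/2)

def T : Set (ℝ × ℝ × ℝ) := {p | 0 < p.1 ∧ 0 ≤ p.2.2 ∧ p.2.2 ≤ 1 ∧ p.2.2 ≤ p.2.1}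

noncomputable def g (p : ℝ × ℝ × ℝ) : ℝ :=
  p.1^2 * Real.exp (-((1 + p.2.1^2 - p.2.2^2)/2) * p.1^2)

lemma hS : MeasurableSet S := by
  unfold S
  measurability

lemma hT : MeasurableSet T := by
  unfold T
  measurability

noncomputable def F (p : ℝ × ℝ × ℝ) : ENNReal := S.indicator (fun p => ENNReal.ofReal (f p)) p
noncomputable def G (p : ℝ × ℝ × ℝ) : ENNReal := T.indicator (fun p => ENNReal.ofReal (g p)) p

lemma hf : Measurable f := by unfold f; fun_prop
lemma hg : Measurable g := by unfold g; fun_prop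
lemma hF : Measurable F := hf.ennreal_ofReal.indicator hS
lemma hG : Measurable G := hg.ennreal_ofReal.indicator hT

lemma scale_pt (h w r : ℝ) (hh : 0 < h) :
    ENNReal.ofReal h * (ENNReal.ofReal h * F (h, h*w, h*r)) = G (h, w, r) := by
  have hiff : (h, h*w, h*r) ∈ S ↔ (h, w, r) ∈ T := by
    simp only [S, T, mem_ofPred_eq]
    rw [mul_nonneg_iff_of_pos_left hh, mul_le_iff_le_one_right hh, mul_le_mul_iff_right₀ hh]
    tauto
  unfold F G
  by_cases hm : (h, w, r) ∈ T
  · rw [indicator_of_mem hm, indicator_of_mem (hiff.2 hm), ← ENNReal.ofReal_mul hh.le,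
      ← ENNReal.ofReal_mul hh.le]
    congr 1
    simp only [f, g]
    rw [← Real.exp_add, ← Real.exp_add, ← mul_assoc, ← sq]
    congr 2
    ring
  · rw [indicator_of_notMem hm, indicator_of_notMem (fun h => hm (hiff.1 h))]
    simp

lemma step1 (h : ℝ) (hh : h ≠ 0) : ∫⁻ y, ∫⁻ x, F (h, y, x) = ∫⁻ w, ∫⁻ r, G (h, w, r) := by
  rcases lt_or_gt_of_ne hh with hn | hp
  · have h1 : ∀ y x, F (h, y, x) = 0 := fun y x => by
      refine indicator_of_notMem (fun hm => ?_) _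
      simp only [S, mem_ofPred_eq] at hm
      linarith [hm.1, hm.2.1]
    have h2 : ∀ y x, G (h, y, x) = 0 := fun y x => by
      refine indicator_of_notMem (fun hm => ?_) _
      simp only [T, mem_ofPred_eq] at hm
      linarith [hm.1]
    simp [h1, h2]
  · have hm := hF
    have e1 : ∀ y, ∫⁻ x, F (h, y, x) = ENNReal.ofReal h * ∫⁻ r, F (h, y, h * r) := fun y =>
      lint_scale _ (by fun_prop) h hp
    rw [lint_scale (fun y => ∫⁻ x, F (h, y, x)) ?_ h hp,
      ← lintegral_const_mul' _ _ ENNReal.ofReal_ne_top]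
    · refine lintegral_congr fun w => ?_
      rw [e1, ← lintegral_const_mul' _ _ ENNReal.ofReal_ne_top,
        ← lintegral_const_mul' _ _ ENNReal.ofReal_ne_top]
      exact lintegral_congr fun r => scale_pt h w r hp
    · exact Measurable.lintegral_prod_right' (f := fun q : ℝ × ℝ => F (h, q.1, q.2)) (by fun_prop)

lemma inner_h (w r : ℝ) : ∫⁻ h, G (h, w, r) =
    if 0 ≤ r ∧ r ≤ 1 ∧ r ≤ w then
      ENNReal.ofReal (√(2*π) / 2) * ENNReal.ofReal (((1 + w^2 - r^2) * √(1 + w^2 - r^2))⁻¹)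
    else 0 := by
  split_ifs with hc
  · rw [← ENNReal.ofReal_mul (by positivity), ← gauss_int _ (by nlinarith [hc.1, hc.2.2]),
      ← lintegral_indicator measurableSet_Ioi]
    refine lintegral_congr fun h => ?_
    unfold G
    by_cases hh : 0 < h
    · rw [indicator_of_mem (show (h, w, r) ∈ T from ⟨hh, hc⟩),
        indicator_of_mem (show h ∈ Ioi 0 from hh)]
      rfl
    · rw [indicator_of_notMem (show (h, w, r) ∉ T from fun hm => hh hm.1),
        indicator_of_notMem (show h ∉ Ioi 0 from hh)]
  · have : ∀ h, G (h, w, r) = 0 := fun h => indicator_of_notMem (fun hm => hc hm.2) _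
    simp [this]

lemma inner_w (r : ℝ) (hr : r ≠ 0) (hr1 : r ≠ 1) : ∫⁻ w, ∫⁻ h, G (h, w, r) =
    (Ioo (0:ℝ) 1).indicator
      (fun r => ENNReal.ofReal (√(2*π) / 2) * ENNReal.ofReal ((1 + r)⁻¹)) r := by
  simp_rw [inner_h]
  by_cases hm : r ∈ Ioo (0:ℝ) 1
  · rw [indicator_of_mem hm, ← w_int r hm.1.le hm.2, ← lintegral_const_mul' _ _ ENNReal.ofReal_ne_top,
      restrict_Ioi_eq_restrict_Ici, ← lintegral_indicator measurableSet_Ici]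
    refine lintegral_congr fun w => ?_
    by_cases hw : r ≤ w
    · rw [indicator_of_mem (show w ∈ Ici r from hw), if_pos ⟨hm.1.le, hm.2.le, hw⟩]
    · rw [indicator_of_notMem (show w ∉ Ici r from hw), if_neg (fun h => hw h.2.2)]
  · rw [indicator_of_notMem hm]
    have : ∀ w, ¬ (0 ≤ r ∧ r ≤ 1 ∧ r ≤ w) := fun w h =>
      hm ⟨lt_of_le_of_ne h.1 hr.symm, lt_of_le_of_ne h.2.1 hr1⟩
    simp [this]

lemma total : ∫⁻ p in S, ENNReal.ofReal (f p) = ENNReal.ofReal (√(2*π) * Real.log 2 / 2) := by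
  have mF := hF
  have mG := hG
  rw [← lintegral_indicator hS]
  change ∫⁻ p, F p = _
  rw [Measure.volume_eq_prod, lintegral_prod _ hF.aemeasurable]
  have a1 : ∀ h : ℝ, ∫⁻ q : ℝ × ℝ, F (h, q) = ∫⁻ y, ∫⁻ x, F (h, y, x) := fun h => by
    rw [Measure.volume_eq_prod, lintegral_prod _ (by fun_prop)]
  simp_rw [a1]
  have a2 : ∫⁻ h, ∫⁻ y, ∫⁻ x, F (h, y, x) = ∫⁻ h, ∫⁻ w, ∫⁻ r, G (h, w, r) := by
    refine lintegral_congr_ae ?_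
    filter_upwards [Measure.ae_ne volume (0:ℝ)] with h hh using step1 h hh
  have a3 : ∀ h : ℝ, ∫⁻ w, ∫⁻ r, G (h, w, r) = ∫⁻ r, ∫⁻ w, G (h, w, r) := fun h =>
    lintegral_lintegral_swap (f := fun w r => G (h, w, r)) (by unfold Function.uncurry; fun_prop)
  have a4 : ∫⁻ h, ∫⁻ r, ∫⁻ w, G (h, w, r) = ∫⁻ r, ∫⁻ h, ∫⁻ w, G (h, w, r) := by
    refine lintegral_lintegral_swap (f := fun h r => ∫⁻ w, G (h, w, r)) ?_
    exact (Measurable.lintegral_prod_right'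
      (f := fun q : (ℝ × ℝ) × ℝ => G (q.1.1, q.2, q.1.2)) (by fun_prop)).aemeasurable
  have a5 : ∀ r : ℝ, ∫⁻ h, ∫⁻ w, G (h, w, r) = ∫⁻ w, ∫⁻ h, G (h, w, r) := fun r =>
    lintegral_lintegral_swap (f := fun h w => G (h, w, r)) (by unfold Function.uncurry; fun_prop)
  rw [a2]
  simp_rw [a3]
  rw [a4]
  simp_rw [a5]
  have a6 : ∫⁻ r, ∫⁻ w, ∫⁻ h, G (h, w, r) = ∫⁻ r, (Ioo (0:ℝ) 1).indicator
      (fun r => ENNReal.ofReal (√(2*π) / 2) * ENNReal.ofReal ((1 + r)⁻¹)) r := by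
    refine lintegral_congr_ae ?_
    filter_upwards [Measure.ae_ne volume (0:ℝ), Measure.ae_ne volume (1:ℝ)] with r h0 h1
      using inner_w r h0 h1
  rw [a6, lintegral_indicator measurableSet_Ioo, lintegral_const_mul' _ _ ENNReal.ofReal_ne_top,
    r_int, ← ENNReal.ofReal_mul (by positivity)]
  congr 1
  ring

end KtildeAux

theorem gaussian_Ktilde :
    IntegrableOn
        (fun p : ℝ × ℝ × ℝ =>
          Real.exp (-p.1^2/2) * Real.exp (-p.2.1^2/2) * Real.exp (p.2.2^2/2))
        {p : ℝ × ℝ × ℝ | 0 ≤ p.2.2 ∧ p.2.2 ≤ p.1 ∧ p.2.2 ≤ p.2.1} volume ∧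
      ∫ p in {p : ℝ × ℝ × ℝ | 0 ≤ p.2.2 ∧ p.2.2 ≤ p.1 ∧ p.2.2 ≤ p.2.1},
          Real.exp (-p.1^2/2) * Real.exp (-p.2.1^2/2) * Real.exp (p.2.2^2/2)
        = Real.sqrt (2*π) * Real.log 2 / 2 := by
  change IntegrableOn KtildeAux.f KtildeAux.S volume ∧ ∫ p in KtildeAux.S, KtildeAux.f p = _
  have hnn : ∀ p, 0 ≤ KtildeAux.f p := fun p => by unfold KtildeAux.f; positivity
  have ht := KtildeAux.total
  constructor
  · refine ⟨KtildeAux.hf.aestronglyMeasurable, ?_⟩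
    rw [hasFiniteIntegral_iff_ofReal (Filter.Eventually.of_forall hnn), ht]
    exact ENNReal.ofReal_lt_top
  · rw [integral_eq_lintegral_of_nonneg_ae (Filter.Eventually.of_forall hnn)
      KtildeAux.hf.aestronglyMeasurable, ht, ENNReal.toReal_ofReal]
    have := Real.log_nonneg (show (1:ℝ) ≤ 2 by norm_num)
    positivity
end

section
/- The integral of e^{−h₁²/2}·e^{−h₂²/2}·e^{h₃²/2}·e^{h₄²/2}·e^{−x²/2} over the region { (h₁, h₂, h₃, h₄, x) ∈ ℝ⁵ : 0 ≤ x ≤ h₄ ≤ h₃, h₃ ≤ h₁, h₃ ≤ h₂ } is finite and equals √(2π)·(1/8)·(π²/6 − (ln 2)²). -/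
open Real MeasureTheory

noncomputable def Ldi (x : ℝ) : ℝ := ∑' n : ℕ, x ^ (n + 1) / ((n : ℝ) + 1) ^ 2

lemma Ldi_hasSum_one : HasSum (fun n : ℕ => 1 / ((n : ℝ) + 1) ^ 2) (π ^ 2 / 6) := by
  have h := (hasSum_nat_add_iff' (f := fun n : ℕ => (1 : ℝ) / (n : ℝ) ^ 2) 1).2 hasSum_zeta_two
  simpa using h

lemma Ldi_zero : Ldi 0 = 0 := by simp [Ldi]

lemma Ldi_one : Ldi 1 = π ^ 2 / 6 := by
  have := Ldi_hasSum_one.tsum_eq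
  simpa [Ldi] using this

lemma Ldi_cont : ContinuousOn Ldi (Set.Icc (-1) 1) := by
  refine continuousOn_tsum (fun n => by fun_prop) Ldi_hasSum_one.summable ?_
  intro n x hx
  rw [norm_div, norm_pow, norm_pow]
  have h1 : ‖x‖ ≤ 1 := abs_le.2 hx
  have h2 : ‖x‖ ^ (n + 1) ≤ 1 := pow_le_one₀ (norm_nonneg _) h1
  have h3 : ‖(n : ℝ) + 1‖ = n + 1 := abs_of_nonneg (by positivity)
  rw [h3]
  gcongr

lemma Ldi_deriv {x : ℝ} (h0 : 0 < x) (h1 : x < 1) : HasDerivAt Ldi (-log (1 - x) / x) x := by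
  obtain ⟨r, hr, hr1⟩ := exists_between h1
  have hr0 : 0 < r := h0.trans hr
  have key := hasDerivAt_tsum_of_isPreconnected (𝕜 := ℝ) (F := ℝ) (u := fun n : ℕ => r ^ n)
    (g := fun (n : ℕ) (x : ℝ) => x ^ (n + 1) / ((n : ℝ) + 1) ^ 2)
    (g' := fun (n : ℕ) (x : ℝ) => x ^ n / ((n : ℝ) + 1)) (t := Set.Ioo (-r) r) (y₀ := x) (y := x)
    (summable_geometric_of_lt_one hr0.le hr1) isOpen_Ioo isPreconnected_Ioo ?_ ?_ ⟨by linarith, hr⟩ ?_ ⟨by linarith, hr⟩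
  · have hs := hasSum_pow_div_log_of_abs_lt_one (x := x) (by rw [abs_of_pos h0]; exact h1)
    have : HasSum (fun n : ℕ => x ^ n / ((n : ℝ) + 1)) (-log (1 - x) / x) := by
      have := hs.div_const x
      refine this.congr_fun fun n => ?_
      rw [pow_succ]
      field_simp
    rw [this.tsum_eq] at key
    exact key
  · intro n y _
    have := (hasDerivAt_pow (n + 1) y).div_const (((n : ℝ) + 1) ^ 2)
    refine this.congr_deriv ?_
    have : (n : ℝ) + 1 ≠ 0 := by positivity
    push_cast
    field_simp
  · intro n y hy
    rw [norm_div, norm_pow]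
    have h1 : ‖y‖ ≤ r := (abs_lt.2 hy).le
    have h3 : ‖(n : ℝ) + 1‖ = n + 1 := abs_of_nonneg (by positivity)
    rw [h3]
    refine (div_le_self (by positivity) (by linarith [(Nat.cast_nonneg n : (0:ℝ) ≤ n)])).trans ?_
    gcongr
  · refine Summable.of_nonneg_of_le (fun n => by positivity) (fun n => ?_) Ldi_hasSum_one.summable
    have : x ^ (n + 1) ≤ 1 := pow_le_one₀ h0.le h1.le
    gcongr

lemma cont_loglog (k : ℝ) (hk : 0 < k) : ContinuousAt (fun x : ℝ => log (k * x) * log (1 - x)) 0 := by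
  have hd : HasDerivAt (fun x : ℝ => log (1 - x)) (-1 / (1 - 0)) 0 :=
    ((hasDerivAt_id (0:ℝ)).const_sub 1).log (by norm_num)
  have hO := hd.isBigO_sub
  simp only [sub_zero, log_one] at hO
  have h2 : (fun x : ℝ => log (k * x) * log (1 - x)) =O[nhds 0] (fun x => log (k * x) * x) :=
    (Asymptotics.isBigO_refl _ _).mul hO
  have h3 : Filter.Tendsto (fun x : ℝ => log (k * x) * x) (nhds 0) (nhds 0) := by
    have : Continuous (fun x : ℝ => (k * x) * log (k * x) / k) :=
      (continuous_mul_log.comp (continuous_const.mul continuous_id)).div_const k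
    have h := this.tendsto 0
    simp only [mul_zero, log_zero, zero_div] at h
    refine h.congr fun x => ?_
    field_simp
  have := h2.trans_tendsto h3
  simpa [ContinuousAt] using this

lemma Ldi_half : Ldi (1 / 2) = π ^ 2 / 12 - log 2 ^ 2 / 2 := by
  set g : ℝ → ℝ := fun x => Ldi x + Ldi (1 - x) + log x * log (1 - x) with hg
  have hmaps : Set.MapsTo (fun x : ℝ => 1 - x) (Set.Icc 0 (1/2)) (Set.Icc (-1) 1) := by
    intro x hx; constructor <;> linarith [hx.1, hx.2]
  have hc : ContinuousOn g (Set.Icc 0 (1 / 2)) := by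
    refine ((Ldi_cont.mono (Set.Icc_subset_Icc (by norm_num) (by norm_num))).add
      (Ldi_cont.comp (by fun_prop) hmaps)).add ?_
    intro x hx
    rcases hx.1.eq_or_lt with h | h
    · subst h
      simpa using (cont_loglog 1 one_pos).continuousWithinAt
    · apply ContinuousAt.continuousWithinAt
      have : 1 - x ≠ 0 := by linarith [hx.2]
      exact (continuousAt_log h.ne').mul (ContinuousAt.log (by fun_prop) this)
  have hder : ∀ x ∈ Set.Ioo (0:ℝ) (1/2), HasDerivAt g 0 x := by
    intro x hx
    have h1 : (1:ℝ) - x ≠ 0 := by linarith [hx.2]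
    have h0 := hx.1.ne'
    have a := Ldi_deriv hx.1 (by linarith [hx.2])
    have b := (Ldi_deriv (x := 1 - x) (by linarith [hx.2]) (by linarith [hx.1])).comp x
      ((hasDerivAt_id x).const_sub 1)
    have c := (hasDerivAt_log h0).mul (((hasDerivAt_id x).const_sub 1).log h1)
    refine ((a.add b).add c).congr_deriv ?_
    simp only [id, sub_sub_cancel]
    field_simp
    ring
  have heq : g (1/2) = g 0 := by
    obtain ⟨c, hc1, hc2⟩ := exists_hasDerivAt_eq_slope g (fun _ => 0) (by norm_num) hc hder
    norm_num at hc2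
    linarith
  have e1 : g (1/2) = 2 * Ldi (1/2) + log 2 ^ 2 := by
    simp only [hg]
    have : (1:ℝ) - 1/2 = 1/2 := by norm_num
    rw [this, one_div, log_inv]; ring
  have e2 : g 0 = π ^ 2 / 6 := by
    simp [hg, Ldi_zero, Ldi_one]
  rw [e1, e2] at heq
  linarith

noncomputable def Hdi (u : ℝ) : ℝ := -(log (2 * u) * log (1 - u)) - Ldi u

lemma Hdi_deriv {u : ℝ} (h0 : 0 < u) (h1 : u < 1) : HasDerivAt Hdi (log (2 * u) / (1 - u)) u := by
  have h1' : (1:ℝ) - u ≠ 0 := by linarith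
  have a1 : HasDerivAt (fun u : ℝ => log (2 * u)) (2 * 1 / (2 * u)) u :=
    ((hasDerivAt_id u).const_mul 2).log (mul_ne_zero two_ne_zero h0.ne')
  have a2 : HasDerivAt (fun u : ℝ => log (1 - u)) (-1 / (1 - u)) u :=
    ((hasDerivAt_id u).const_sub 1).log h1'
  have a3 := (a1.fun_mul a2).fun_neg.fun_sub (Ldi_deriv h0 h1)
  have a4 : HasDerivAt Hdi _ u := a3
  refine a4.congr_deriv ?_
  field_simp
  ring

lemma Hdi_cont0 : ContinuousWithinAt Hdi (Set.Icc 0 1) 0 := by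
  have h1 : ContinuousOn Ldi (Set.Icc 0 1) :=
    Ldi_cont.mono (Set.Icc_subset_Icc (by norm_num) le_rfl)
  have h2 : ContinuousWithinAt Ldi (Set.Icc 0 1) 0 :=
    h1.continuousWithinAt ⟨le_rfl, zero_le_one⟩
  have h3 : ContinuousWithinAt (fun x : ℝ => log (2 * x) * log (1 - x)) (Set.Icc 0 1) 0 :=
    (cont_loglog 2 two_pos).continuousWithinAt
  exact h3.fun_neg.fun_sub h2

lemma Hdi_zero : Hdi 0 = 0 := by simp [Hdi, Ldi_zero]

lemma Hdi_half : Hdi (1 / 2) = -(π ^ 2 / 12 - log 2 ^ 2 / 2) := by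
  rw [Hdi, Ldi_half]; norm_num


lemma lint_Icc {F f : ℝ → ℝ} {a b : ℝ} (hab : a ≤ b)
    (hd : ∀ x ∈ Set.Icc a b, HasDerivAt F (f x) x) (h0 : ∀ x ∈ Set.Icc a b, 0 ≤ f x) :
    ∫⁻ x in Set.Icc a b, ENNReal.ofReal (f x) = ENNReal.ofReal (F b - F a) := by
  have hc : ContinuousOn F (Set.Icc a b) := fun x hx => (hd x hx).continuousAt.continuousWithinAt
  have hi := intervalIntegral.integrableOn_deriv_of_nonneg hc
    (fun x hx => hd x (Set.Ioo_subset_Icc_self hx)) (fun x hx => h0 x (Set.Ioo_subset_Icc_self hx))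
  have he := intervalIntegral.integral_eq_sub_of_hasDerivAt_of_le hab hc
    (fun x hx => hd x (Set.Ioo_subset_Icc_self hx))
    ((intervalIntegrable_iff_integrableOn_Ioc_of_le hab).2 hi)
  rw [← he, intervalIntegral.integral_of_le hab, ofReal_integral_eq_lintegral_ofReal hi]
  · exact setLIntegral_congr Ioc_ae_eq_Icc.symm
  · exact (ae_restrict_iff' measurableSet_Ioc).2
      (Filter.Eventually.of_forall fun x hx => h0 x (Set.Ioc_subset_Icc_self hx))

lemma lint_Ioi {F f : ℝ → ℝ} {a l : ℝ} (hc : ContinuousWithinAt F (Set.Ici a) a)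
    (hd : ∀ x ∈ Set.Ioi a, HasDerivAt F (f x) x) (h0 : ∀ x ∈ Set.Ioi a, 0 ≤ f x)
    (hl : Filter.Tendsto F Filter.atTop (nhds l)) :
    ∫⁻ x in Set.Ioi a, ENNReal.ofReal (f x) = ENNReal.ofReal (l - F a) := by
  rw [← integral_Ioi_of_hasDerivAt_of_nonneg hc hd h0 hl, ofReal_integral_eq_lintegral_ofReal
    (integrableOn_Ioi_deriv_of_nonneg hc hd h0 hl)]
  exact (ae_restrict_iff' measurableSet_Ioi).2 (Filter.Eventually.of_forall h0)

lemma lint_b {Q : ℝ} (hQ : 0 < Q) :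
    ∫⁻ b in Set.Ioi (0:ℝ), ENNReal.ofReal (b ^ 4 * rexp (-(b ^ 2 * Q) / 2)) =
      ENNReal.ofReal (3 * √(π / 2) * (1 / (Q ^ 2 * √Q))) := by
  have hi := integrableOn_rpow_mul_exp_neg_mul_sq (b := Q / 2) (by positivity) (s := 4) (by norm_num)
  have hv := integral_rpow_mul_exp_neg_mul_rpow (p := 2) (q := 4) (b := Q / 2) (by norm_num)
    (by norm_num) (by positivity)
  have hfun : ∀ b : ℝ, b ^ 4 * rexp (-(b ^ 2 * Q) / 2) = b ^ (4:ℝ) * rexp (-(Q / 2) * b ^ 2) := by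
    intro b
    rw [show (4:ℝ) = ((4:ℕ):ℝ) by norm_num, rpow_natCast]
    congr 2; ring
  simp only [hfun]
  rw [← ofReal_integral_eq_lintegral_ofReal hi]
  · congr 1
    simp only [rpow_two] at hv
    rw [hv]
    have hG : Gamma ((4 + 1) / 2) = 3 / 4 * √π := by
      have := Real.Gamma_nat_add_half 2
      norm_num [Nat.doubleFactorial] at this
      rw [show ((4:ℝ) + 1) / 2 = 5 / 2 by norm_num, this]; ring
    rw [hG]
    have hp : (Q / 2) ^ (-(4 + 1) / 2 : ℝ) = 1 / ((Q/2) ^ 2 * √(Q/2)) := by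
      rw [show (-(4 + 1) / 2 : ℝ) = -((2:ℕ) + 1/2) by norm_num, rpow_neg (by positivity),
        rpow_add (by positivity), rpow_natCast, ← sqrt_eq_rpow, one_div]
    rw [hp, sqrt_div hQ.le, sqrt_div pi_pos.le]
    have h2 : √2 ≠ 0 := by positivity
    have h3 : √Q ≠ 0 := by positivity
    have h4 : √2 ^ 2 = 2 := sq_sqrt (by norm_num)
    field_simp
    rw [h4]; ring
  · refine (ae_restrict_iff' measurableSet_Ioi).2 (Filter.Eventually.of_forall fun x hx => ?_)
    have : (0:ℝ) < x := hx
    simp only [Pi.zero_apply]; positivity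

lemma lint_w {A z : ℝ} (hA : 0 < A) (hz : 0 ≤ z) :
    ∫⁻ w in Set.Icc 0 z, ENNReal.ofReal (1 / ((A + w ^ 2) ^ 2 * √(A + w ^ 2))) =
      ENNReal.ofReal (z / (3 * A * (A + z ^ 2) * √(A + z ^ 2)) + 2 * z / (3 * A ^ 2 * √(A + z ^ 2))) := by
  rw [lint_Icc (F := fun z => z / (3 * A * (A + z ^ 2) * √(A + z ^ 2)) + 2 * z / (3 * A ^ 2 * √(A + z ^ 2))) hz]
  · simp
  · intro w _
    have hq : 0 < A + w ^ 2 := by positivity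
    have d0 : HasDerivAt (fun w : ℝ => A + w ^ 2) (2 * w) w := by
      simpa using (hasDerivAt_pow 2 w).const_add A
    have d1 := d0.sqrt hq.ne'
    have hs : √(A + w ^ 2) ≠ 0 := by positivity
    have e1 := (hasDerivAt_id w).div ((d0.const_mul (3 * A)).mul d1) (by simp; exact ⟨⟨hA.ne', hq.ne'⟩, hs⟩)
    have e2 := ((hasDerivAt_id w).const_mul 2).div (d1.const_mul (3 * A ^ 2)) (by simp; exact ⟨hA.ne', hs⟩)
    refine (e1.add e2).congr_deriv ?_
    have h4 : √(A + w ^ 2) ^ 2 = A + w ^ 2 := sq_sqrt hq.le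
    have hA' := hA.ne'
    have hq' := hq.ne'
    simp only [id, Pi.mul_apply]
    generalize √(A + w ^ 2) = r at *
    have h5 : r ^ 4 = (A + w ^ 2) ^ 2 := by rw [← h4]; ring
    have hw : w ^ 2 = r ^ 2 - A := by linarith
    rw [← h4]
    field_simp
    rw [hw]
    ring
  · intro w _
    positivity

lemma lint_z {R y : ℝ} (hy : 0 ≤ y) (hR : y ^ 2 < R) :
    ∫⁻ z in Set.Icc 0 y, ENNReal.ofReal (z / (3 * (R - z ^ 2) * R * √R) + 2 * z / (3 * (R - z ^ 2) ^ 2 * √R)) =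
      ENNReal.ofReal ((log R - log (R - y ^ 2)) / (6 * R * √R) + y ^ 2 / (3 * R * √R * (R - y ^ 2))) := by
  have hR0 : 0 < R := lt_of_le_of_lt (sq_nonneg y) hR
  have hs : 0 < √R := by positivity
  rw [lint_Icc (F := fun z => -log (R - z ^ 2) / (6 * R * √R) + 1 / (3 * √R) * (R - z ^ 2)⁻¹) hy]
  · congr 1
    have : R - y ^ 2 ≠ 0 := by linarith
    simp
    field_simp
    ring
  · intro z hz
    have hq : R - z ^ 2 ≠ 0 := by nlinarith [hz.1, hz.2]
    have d0 : HasDerivAt (fun w : ℝ => R - w ^ 2) (-(2 * z)) z := by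
      simpa using (hasDerivAt_pow 2 z).const_sub R
    refine (((d0.log hq).neg.div_const (6 * R * √R)).add ((d0.inv hq).const_mul (1 / (3 * √R)))).congr_deriv ?_
    field_simp
    ring
  · intro z hz
    have hq : 0 < R - z ^ 2 := by nlinarith [hz.1, hz.2]
    have := hz.1
    positivity

lemma lint_y {S : ℝ} (hS : 2 < S) :
    ∫⁻ y in Set.Icc (0:ℝ) 1, ENNReal.ofReal ((log (S - y ^ 2) - log (S - y ^ 2 - y ^ 2)) / (6 * (S - y ^ 2) * √(S - y ^ 2))
        + y ^ 2 / (3 * (S - y ^ 2) * √(S - y ^ 2) * (S - y ^ 2 - y ^ 2))) =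
      ENNReal.ofReal ((log (S - 1) - log (S - 2)) / (6 * S * √(S - 1))) := by
  rw [lint_Icc (F := fun y => (y / (6 * S * √(S - y ^ 2))) * (log (S - y ^ 2) - log (S - y ^ 2 - y ^ 2))) zero_le_one]
  · congr 1
    rw [show S - 1 ^ 2 - 1 ^ 2 = S - 2 by ring]
    simp; ring
  · intro y hy
    have hy2 : y ^ 2 ≤ 1 := by nlinarith [hy.1, hy.2]
    have hq : 0 < S - y ^ 2 := by linarith
    have hq2 : 0 < S - y ^ 2 - y ^ 2 := by linarith
    have d0 : HasDerivAt (fun w : ℝ => S - w ^ 2) (-(2 * y)) y := by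
      simpa using (hasDerivAt_pow 2 y).const_sub S
    have d1 : HasDerivAt (fun w : ℝ => S - w ^ 2 - w ^ 2) (-(2 * y) - 2 * y) y := by
      exact (d0.sub (hasDerivAt_pow 2 y)).congr_deriv (by simp)
    have hs : √(S - y ^ 2) ≠ 0 := by positivity
    have hS0 : S ≠ 0 := by linarith
    have e := ((hasDerivAt_id y).div ((d0.sqrt hq.ne').const_mul (6 * S)) (by simp; exact ⟨hS0, hs⟩)).mul
      ((d0.log hq.ne').sub (d1.log hq2.ne'))
    refine e.congr_deriv ?_
    simp only [id, Pi.sub_apply, Pi.div_apply]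
    have h4 : √(S - y ^ 2) ^ 2 = S - y ^ 2 := sq_sqrt hq.le
    have hq' := hq.ne'
    have hq2' := hq2.ne'
    generalize log (S - y ^ 2) = l1
    generalize log (S - y ^ 2 - y ^ 2) = l2
    generalize √(S - y ^ 2) = r at *
    have hw : S = r ^ 2 + y ^ 2 := by linarith
    subst hw
    have : r ^ 2 + y ^ 2 - y ^ 2 = r ^ 2 := by ring
    rw [this] at hq2' ⊢
    field_simp
    ring
  · intro y hy
    have hy2 : y ^ 2 ≤ 1 := by nlinarith [hy.1, hy.2]
    have hq : 0 < S - y ^ 2 := by linarith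
    have hq2 : 0 < S - y ^ 2 - y ^ 2 := by linarith
    have : 0 ≤ log (S - y ^ 2) - log (S - y ^ 2 - y ^ 2) :=
      sub_nonneg.2 (log_le_log hq2 (by linarith [sq_nonneg y]))
    positivity

lemma lint_alpha :
    ∫⁻ t in Set.Ioi (1:ℝ), ENNReal.ofReal
      ((log (t ^ 2 + 1 - 1) - log (t ^ 2 + 1 - 2)) / (6 * (t ^ 2 + 1) * √(t ^ 2 + 1 - 1))) =
    ENNReal.ofReal (1 / 12 * (π ^ 2 / 12 - log 2 ^ 2 / 2)) := by
  rw [lint_Ioi (F := fun t => -(1 / 12) * Hdi ((1 - (t ^ 2)⁻¹) / 2))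
    (l := -(1/12) * Hdi (1 / 2))]
  · congr 1
    rw [Hdi_half]; norm_num [Hdi_zero]; ring
  · refine continuousWithinAt_const.mul ?_
    have h10 : (1 - ((1:ℝ) ^ 2)⁻¹) / 2 = 0 := by norm_num
    refine ContinuousWithinAt.comp (g := Hdi) (f := fun t : ℝ => (1 - (t ^ 2)⁻¹) / 2)
      (t := Set.Icc 0 1) (by rw [h10]; exact Hdi_cont0) ?_ ?_
    · have : ContinuousAt (fun t : ℝ => (1 - (t ^ 2)⁻¹) / 2) 1 := by
        fun_prop (disch := norm_num)
      exact this.continuousWithinAt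
    · intro t ht
      have h1 : 1 ≤ t ^ 2 := one_le_pow₀ ht
      have h2 : (t ^ 2)⁻¹ ≤ 1 := inv_le_one_of_one_le₀ h1
      have h3 : 0 < (t ^ 2)⁻¹ := by positivity
      constructor <;> linarith
  · intro t ht
    have ht : 1 < t := ht
    have h1 : 1 < t ^ 2 := one_lt_pow₀ ht (by norm_num)
    have h2 : (t ^ 2)⁻¹ < 1 := inv_lt_one_of_one_lt₀ h1
    have h3 : 0 < (t ^ 2)⁻¹ := by positivity
    have h0 : t ≠ 0 := by linarith
    have d : HasDerivAt (fun t : ℝ => (1 - (t ^ 2)⁻¹) / 2) (1 / t ^ 3) t := by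
      refine ((((hasDerivAt_pow 2 t).inv (by positivity)).const_sub 1).div_const 2).congr_deriv ?_
      norm_num
      field_simp
    have e := ((Hdi_deriv (u := (1 - (t ^ 2)⁻¹) / 2) (by linarith) (by linarith)).comp t d).const_mul (-(1/12))
    refine e.congr_deriv ?_
    have hl : log (2 * ((1 - (t ^ 2)⁻¹) / 2)) = log (t ^ 2 + 1 - 2) - log (t ^ 2) := by
      rw [← log_div (by linarith) (by positivity)]
      congr 1
      field_simp
      ring
    rw [hl, add_sub_cancel_right, sqrt_sq (by linarith)]
    have : 1 - (1 - (t ^ 2)⁻¹) / 2 = (t ^ 2 + 1) / (2 * t ^ 2) := by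
      field_simp; ring
    rw [this]
    field_simp
    ring
  · intro t ht
    have ht : 1 < t := ht
    have h1 : 1 < t ^ 2 := one_lt_pow₀ ht (by norm_num)
    have : 0 ≤ log (t ^ 2 + 1 - 1) - log (t ^ 2 + 1 - 2) :=
      sub_nonneg.2 (log_le_log (by linarith) (by linarith))
    positivity
  · refine Filter.Tendsto.const_mul _ ?_
    refine (Hdi_deriv (u := 1/2) (by norm_num) (by norm_num)).continuousAt.tendsto.comp ?_
    have : Filter.Tendsto (fun t : ℝ => (t ^ 2)⁻¹) Filter.atTop (nhds 0) :=
      tendsto_inv_atTop_zero.comp (Filter.tendsto_pow_atTop (by norm_num))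
    simpa using (this.const_sub 1).div_const 2

lemma lint_symm (g : ℝ → ℝ → ENNReal) (hg : Measurable (Function.uncurry g))
    (hs : ∀ a b, g a b = g b a) :
    ∫⁻ a, ∫⁻ b, g a b = 2 * ∫⁻ b, ∫⁻ a, (if b < a then g a b else 0) := by
  have hm : Measurable (Function.uncurry fun a b : ℝ => if a < b then g a b else 0) :=
    Measurable.ite (measurableSet_lt measurable_fst measurable_snd) hg measurable_const
  have hm' : Measurable (Function.uncurry fun a b : ℝ => if b < a then g a b else 0) :=
    Measurable.ite (measurableSet_lt measurable_snd measurable_fst) hg measurable_const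
  have h1 : ∀ a, ∫⁻ b, g a b = (∫⁻ b, if a < b then g a b else 0) + ∫⁻ b, if b < a then g a b else 0 := by
    intro a
    rw [← lintegral_add_left (f := fun b => if a < b then g a b else 0)
      (hm.comp measurable_prodMk_left)]
    refine lintegral_congr_ae ?_
    filter_upwards [(measure_eq_zero_iff_ae_notMem (μ := volume) (s := {a})).1 (by simp)] with b hb
    have hb : b ≠ a := hb
    rcases lt_or_gt_of_ne hb with h | h
    · simp [h, h.not_gt]
    · simp [h, h.not_gt]
  simp only [h1]
  rw [lintegral_add_left (f := fun a => ∫⁻ b, if a < b then g a b else 0)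
    hm.lintegral_prod_right', two_mul]
  congr 1
  · refine lintegral_congr fun a => lintegral_congr fun b => ?_
    rw [hs a b]
  · exact lintegral_lintegral_swap hm'.aemeasurable

def TT : Set (ℝ × ℝ × ℝ × ℝ) :=
  {q | 1 < q.1 ∧ q.2.1 ≤ 1 ∧ q.2.2.1 ≤ q.2.1 ∧ q.2.2.2 ≤ q.2.2.1 ∧ 0 ≤ q.2.2.2}

lemma TT_meas : MeasurableSet TT := by
  unfold TT
  measurability

def QQ (q : ℝ × ℝ × ℝ × ℝ) : ℝ := q.1 ^ 2 + 1 - q.2.1 ^ 2 - q.2.2.1 ^ 2 + q.2.2.2 ^ 2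

lemma QQ_pos {q} (h : q ∈ TT) : 0 < QQ q := by
  obtain ⟨h1, h2, h3, h4, h5⟩ := h
  have : 1 < q.1 ^ 2 := one_lt_pow₀ h1 (by norm_num)
  unfold QQ
  nlinarith

lemma QQ_meas : Measurable QQ := by unfold QQ; fun_prop

open Classical in
noncomputable def GG (a b : ℝ) (r : ℝ × ℝ × ℝ) : ENNReal :=
  if 0 ≤ r.2.2 ∧ r.2.2 ≤ r.2.1 ∧ r.2.1 ≤ r.1 ∧ r.1 ≤ a ∧ r.1 ≤ b then
    ENNReal.ofReal (rexp (-(a ^ 2 + b ^ 2 - r.1 ^ 2 - r.2.1 ^ 2 + r.2.2 ^ 2) / 2)) else 0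

lemma GG_meas : Measurable fun p : ℝ × ℝ × ℝ × ℝ × ℝ => GG p.1 p.2.1 p.2.2 := by
  unfold GG
  refine Measurable.ite ?_ (by fun_prop) measurable_const
  simp only [Set.ofPred_and]
  exact (measurableSet_le (by fun_prop) (by fun_prop)).inter
   ((measurableSet_le (by fun_prop) (by fun_prop)).inter
   ((measurableSet_le (by fun_prop) (by fun_prop)).inter
   ((measurableSet_le (by fun_prop) (by fun_prop)).inter
   (measurableSet_le (by fun_prop) (by fun_prop)))))

lemma haar4 : (volume : Measure (ℝ × ℝ × ℝ × ℝ)).IsAddHaarMeasure := by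
  have h2 : (volume : Measure (ℝ × ℝ)).IsAddHaarMeasure :=
    inferInstanceAs (Measure.prod volume volume).IsAddHaarMeasure
  have h3 : (volume : Measure (ℝ × ℝ × ℝ)).IsAddHaarMeasure :=
    inferInstanceAs (Measure.prod volume volume).IsAddHaarMeasure
  exact inferInstanceAs (Measure.prod volume volume).IsAddHaarMeasure

lemma lint_smul (f : ℝ × ℝ × ℝ × ℝ → ENNReal) (hf : Measurable f) {b : ℝ} (hb : 0 < b) :
    ∫⁻ q, f q = ∫⁻ q, ENNReal.ofReal (b ^ 4) * f (b • q) := by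
  have := haar4
  have h := Measure.map_addHaar_smul (volume : Measure (ℝ × ℝ × ℝ × ℝ)) hb.ne'
  have h2 : ∫⁻ q, f (b • q) = ∫⁻ q, f q ∂(Measure.map (fun x => b • x) volume) :=
    (lintegral_map hf (measurable_const_smul b)).symm
  have hfr : Module.finrank ℝ (ℝ × ℝ × ℝ × ℝ) = 4 := by simp
  rw [lintegral_const_mul (f := fun q => f (b • q)) _ (hf.comp (measurable_const_smul b)), h2, h, lintegral_smul_measure, hfr,
    smul_eq_mul, ← mul_assoc, ← ENNReal.ofReal_mul (by positivity), abs_of_pos (by positivity),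
    mul_inv_cancel₀ (by positivity)]
  simp

lemma lint_reduce :
    ∫⁻ p : ℝ × ℝ × ℝ × ℝ × ℝ, GG p.1 p.2.1 p.2.2 =
      2 * ∫⁻ q, TT.indicator (fun q => ENNReal.ofReal (3 * √(π / 2) * (1 / (QQ q ^ 2 * √(QQ q))))) q := by
  have hG := GG_meas
  have e1 : ∫⁻ p : ℝ × ℝ × ℝ × ℝ × ℝ, GG p.1 p.2.1 p.2.2 = ∫⁻ a, ∫⁻ b, ∫⁻ r, GG a b r := by
    rw [Measure.volume_eq_prod, lintegral_prod _ hG.aemeasurable]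
    refine lintegral_congr fun a => ?_
    rw [Measure.volume_eq_prod, lintegral_prod]
    exact (hG.comp measurable_prodMk_left).aemeasurable
  have hmg : Measurable (Function.uncurry fun a b => ∫⁻ r, GG a b r) := by
    have : Measurable fun p : (ℝ × ℝ) × (ℝ × ℝ × ℝ) => GG p.1.1 p.1.2 p.2 :=
      hG.comp (g := fun p : ℝ × ℝ × ℝ × ℝ × ℝ => GG p.1 p.2.1 p.2.2)
        (f := fun p : (ℝ × ℝ) × (ℝ × ℝ × ℝ) => (p.1.1, p.1.2, p.2)) (by fun_prop)
    exact this.lintegral_prod_right'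
  rw [e1, lint_symm _ hmg]
  swap
  · intro a b
    refine lintegral_congr fun r => ?_
    unfold GG
    congr 1
    · rw [and_comm (a := r.1 ≤ a)]
    · rw [add_comm (a ^ 2)]
  congr 1
  -- restrict to positive b
  have hm4 : ∀ b : ℝ, Measurable fun q : ℝ × ℝ × ℝ × ℝ => if b < q.1 then GG q.1 b q.2 else 0 := by
    intro b
    refine Measurable.ite (measurableSet_lt (by fun_prop) (by fun_prop)) ?_ measurable_const
    exact hG.comp (g := fun p : ℝ × ℝ × ℝ × ℝ × ℝ => GG p.1 p.2.1 p.2.2)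
        (f := fun q : ℝ × ℝ × ℝ × ℝ => (q.1, b, q.2)) (by fun_prop)
  have e2 : ∀ b : ℝ, ∫⁻ a, (if b < a then ∫⁻ r, GG a b r else 0) =
      ∫⁻ q : ℝ × ℝ × ℝ × ℝ, if b < q.1 then GG q.1 b q.2 else 0 := by
    intro b
    rw [Measure.volume_eq_prod ℝ (ℝ × ℝ × ℝ), lintegral_prod _ (hm4 b).aemeasurable]
    refine lintegral_congr fun a => ?_
    split_ifs <;> simp
  simp only [e2]
  have e3 : ∫⁻ b, ∫⁻ q : ℝ × ℝ × ℝ × ℝ, (if b < q.1 then GG q.1 b q.2 else 0) =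
      ∫⁻ b in Set.Ioi (0:ℝ), ∫⁻ q : ℝ × ℝ × ℝ × ℝ, if b < q.1 then GG q.1 b q.2 else 0 := by
    rw [setLIntegral_congr Ioi_ae_eq_Ici, ← lintegral_indicator measurableSet_Ici]
    refine lintegral_congr fun b => ?_
    by_cases hb : 0 ≤ b
    · simp [hb]
    · rw [Set.indicator_of_notMem (by simpa using hb)]
      rw [lintegral_eq_zero_iff (hm4 b)]
      refine Filter.Eventually.of_forall fun q => ?_
      simp only [Pi.zero_apply, GG]
      split_ifs with h1 h2
      · exact absurd (h2.1.trans (h2.2.1.trans (h2.2.2.1.trans h2.2.2.2.2))) hb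
      · rfl
      · rfl
  rw [e3]
  have e4 : ∀ b ∈ Set.Ioi (0:ℝ), ∫⁻ q : ℝ × ℝ × ℝ × ℝ, (if b < q.1 then GG q.1 b q.2 else 0) =
      ∫⁻ q, TT.indicator (fun q => ENNReal.ofReal (b ^ 4 * rexp (-(b ^ 2 * QQ q) / 2))) q := by
    intro b hb
    have hb : 0 < b := hb
    rw [lint_smul _ (hm4 b) hb]
    refine lintegral_congr fun q => ?_
    obtain ⟨α, y, z, w⟩ := q
    have hT : ((α, y, z, w) ∈ TT) ↔ (b < b * α ∧ (0 ≤ b * w ∧ b * w ≤ b * z ∧ b * z ≤ b * y ∧ b * y ≤ b * α ∧ b * y ≤ b)) := by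
      have m : ∀ {s t : ℝ}, b * s ≤ b * t ↔ s ≤ t := mul_le_mul_iff_right₀ hb
      have m1 : ∀ {s : ℝ}, b * s ≤ b ↔ s ≤ 1 := mul_le_iff_le_one_right hb
      have m2 : ∀ {s : ℝ}, b < b * s ↔ 1 < s := lt_mul_iff_one_lt_right hb
      have m3 : ∀ {s : ℝ}, 0 ≤ b * s ↔ 0 ≤ s := mul_nonneg_iff_of_pos_left hb
      simp only [m, m1, m2, m3, TT, Set.mem_ofPred_eq]
      constructor
      · rintro ⟨h1, h2, h3, h4, h5⟩
        exact ⟨h1, h5, h4, h3, by linarith, h2⟩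
      · rintro ⟨h1, h5, h4, h3, _, h2⟩
        exact ⟨h1, h2, h3, h4, h5⟩
    simp only [GG, Prod.smul_mk, smul_eq_mul]
    by_cases h : (α, y, z, w) ∈ TT
    · rw [Set.indicator_of_mem h, if_pos (hT.1 h).1, if_pos (hT.1 h).2,
        ENNReal.ofReal_mul (by positivity)]
      congr 4
      simp only [QQ]; ring
    · rw [Set.indicator_of_notMem h]
      rw [hT] at h
      split_ifs with h1 h2
      · exact absurd ⟨h1, h2⟩ h
      · simp
      · simp
  rw [setLIntegral_congr_fun measurableSet_Ioi e4]
  rw [lintegral_lintegral_swap]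
  · refine lintegral_congr fun q => ?_
    by_cases h : q ∈ TT
    · simp only [Set.indicator_of_mem h]
      exact lint_b (QQ_pos h)
    · simp [Set.indicator_of_notMem h]
  · refine Measurable.aemeasurable ?_
    have hQ := QQ_meas
    have : Measurable fun p : ℝ × (ℝ × ℝ × ℝ × ℝ) => ENNReal.ofReal (p.1 ^ 4 * rexp (-(p.1 ^ 2 * QQ p.2) / 2)) := by
      fun_prop
    exact this.indicator (measurable_snd TT_meas)

lemma lint_TT :
    ∫⁻ q, TT.indicator (fun q => ENNReal.ofReal (1 / (QQ q ^ 2 * √(QQ q)))) q =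
      ENNReal.ofReal (1 / 12 * (π ^ 2 / 12 - log 2 ^ 2 / 2)) := by
  have hQ := QQ_meas
  have hm : Measurable (TT.indicator (fun q => ENNReal.ofReal (1 / (QQ q ^ 2 * √(QQ q))))) := by
    refine Measurable.indicator ?_ TT_meas
    fun_prop
  set k := TT.indicator (fun q => ENNReal.ofReal (1 / (QQ q ^ 2 * √(QQ q)))) with hk
  have e1 : ∫⁻ q, k q = ∫⁻ t, ∫⁻ y, ∫⁻ z, ∫⁻ w, k (t, y, z, w) := by
    rw [Measure.volume_eq_prod, lintegral_prod _ hm.aemeasurable]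
    refine lintegral_congr fun t => ?_
    have hm2 : Measurable fun q : ℝ × ℝ × ℝ => k (t, q) := hm.comp measurable_prodMk_left
    rw [Measure.volume_eq_prod, lintegral_prod _ hm2.aemeasurable]
    refine lintegral_congr fun y => ?_
    have hm3 : Measurable fun q : ℝ × ℝ => k (t, y, q) := hm2.comp measurable_prodMk_left
    rw [Measure.volume_eq_prod, lintegral_prod _ hm3.aemeasurable]
  rw [e1, ← lint_alpha, ← lintegral_indicator measurableSet_Ioi]
  refine lintegral_congr fun t => ?_
  by_cases ht : 1 < t
  swap
  · have : ∀ y z w, k (t, y, z, w) = 0 := fun y z w =>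
      Set.indicator_of_notMem (fun h => ht h.1) _
    rw [Set.indicator_of_notMem (by simpa using ht)]
    simp [this]
  have ht2 : 1 < t ^ 2 := one_lt_pow₀ ht (by norm_num)
  rw [Set.indicator_of_mem (Set.mem_Ioi.2 ht), ← lint_y (by linarith),
    ← lintegral_indicator measurableSet_Icc]
  refine lintegral_congr fun y => ?_
  by_cases hy : y ∈ Set.Icc (0:ℝ) 1
  swap
  · have : ∀ z w, k (t, y, z, w) = 0 := fun z w =>
      Set.indicator_of_notMem (fun h : (t, y, z, w) ∈ TT =>
        hy ⟨h.2.2.2.2.trans (h.2.2.2.1.trans h.2.2.1), h.2.1⟩) _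
    rw [Set.indicator_of_notMem hy]
    simp [this]
  have hy2 : y ^ 2 ≤ 1 := by nlinarith [hy.1, hy.2]
  rw [Set.indicator_of_mem hy, ← lint_z hy.1 (by linarith),
    ← lintegral_indicator measurableSet_Icc]
  refine lintegral_congr fun z => ?_
  by_cases hz : z ∈ Set.Icc (0:ℝ) y
  swap
  · have : ∀ w, k (t, y, z, w) = 0 := fun w =>
      Set.indicator_of_notMem (fun h : (t, y, z, w) ∈ TT =>
        hz ⟨h.2.2.2.2.trans h.2.2.2.1, h.2.2.1⟩) _
    rw [Set.indicator_of_notMem hz]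
    simp [this]
  have hz2 : z ^ 2 ≤ y ^ 2 := by nlinarith [hz.1, hz.2]
  have hw := lint_w (A := t ^ 2 + 1 - y ^ 2 - z ^ 2) (z := z) (by linarith) hz.1
  rw [sub_add_cancel] at hw
  rw [Set.indicator_of_mem hz, ← hw, ← lintegral_indicator measurableSet_Icc]
  refine lintegral_congr fun w => ?_
  by_cases hw : w ∈ Set.Icc (0:ℝ) z
  · have hT : (t, y, z, w) ∈ TT := ⟨ht, hy.2, hz.2, hw.2, hw.1⟩
    rw [Set.indicator_of_mem hw, hk, Set.indicator_of_mem hT]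
    rfl
  · rw [Set.indicator_of_notMem hw, hk, Set.indicator_of_notMem]
    exact fun h : (t, y, z, w) ∈ TT => hw ⟨h.2.2.2.2, h.2.2.2.1⟩

lemma lint_GG :
    ∫⁻ p : ℝ × ℝ × ℝ × ℝ × ℝ, GG p.1 p.2.1 p.2.2 =
      ENNReal.ofReal (√(2 * π) * (1 / 8) * (π ^ 2 / 6 - log 2 ^ 2)) := by
  have hQ := QQ_meas
  have h3 : (0:ℝ) ≤ 3 * √(π / 2) := by positivity
  have : ∀ q, TT.indicator (fun q => ENNReal.ofReal (3 * √(π / 2) * (1 / (QQ q ^ 2 * √(QQ q))))) q =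
      ENNReal.ofReal (3 * √(π / 2)) *
        TT.indicator (fun q => ENNReal.ofReal (1 / (QQ q ^ 2 * √(QQ q)))) q := by
    intro q
    by_cases h : q ∈ TT
    · simp only [Set.indicator_of_mem h]
      rw [ENNReal.ofReal_mul h3]
    · simp [Set.indicator_of_notMem h]
  rw [lint_reduce, lintegral_congr this, lintegral_const_mul _
    (Measurable.indicator (by fun_prop) TT_meas), lint_TT, ← ENNReal.ofReal_mul h3,
    show (2 : ENNReal) = ENNReal.ofReal 2 by simp, ← ENNReal.ofReal_mul zero_le_two]
  congr 1
  have h2 : √(2 * π) = 2 * √(π / 2) := by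
    rw [show 2 * π = 2 ^ 2 * (π / 2) by ring, sqrt_mul (by positivity), sqrt_sq zero_le_two]
  rw [h2]; ring

theorem gaussian_K :
    IntegrableOn
        (fun p : ℝ × ℝ × ℝ × ℝ × ℝ =>
          Real.exp (-p.1^2/2) * Real.exp (-p.2.1^2/2) * Real.exp (p.2.2.1^2/2) *
            Real.exp (p.2.2.2.1^2/2) * Real.exp (-p.2.2.2.2^2/2))
        {p : ℝ × ℝ × ℝ × ℝ × ℝ |
          0 ≤ p.2.2.2.2 ∧ p.2.2.2.2 ≤ p.2.2.2.1 ∧ p.2.2.2.1 ≤ p.2.2.1 ∧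
            p.2.2.1 ≤ p.1 ∧ p.2.2.1 ≤ p.2.1} volume ∧
      ∫ p in {p : ℝ × ℝ × ℝ × ℝ × ℝ |
          0 ≤ p.2.2.2.2 ∧ p.2.2.2.2 ≤ p.2.2.2.1 ∧ p.2.2.2.1 ≤ p.2.2.1 ∧
            p.2.2.1 ≤ p.1 ∧ p.2.2.1 ≤ p.2.1},
          Real.exp (-p.1^2/2) * Real.exp (-p.2.1^2/2) * Real.exp (p.2.2.1^2/2) *
            Real.exp (p.2.2.2.1^2/2) * Real.exp (-p.2.2.2.2^2/2)
        = Real.sqrt (2*π) * (1/8) * (π^2/6 - (Real.log 2)^2) := by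
  set S := {p : ℝ × ℝ × ℝ × ℝ × ℝ |
          0 ≤ p.2.2.2.2 ∧ p.2.2.2.2 ≤ p.2.2.2.1 ∧ p.2.2.2.1 ≤ p.2.2.1 ∧
            p.2.2.1 ≤ p.1 ∧ p.2.2.1 ≤ p.2.1} with hS
  set f := fun p : ℝ × ℝ × ℝ × ℝ × ℝ =>
          Real.exp (-p.1^2/2) * Real.exp (-p.2.1^2/2) * Real.exp (p.2.2.1^2/2) *
            Real.exp (p.2.2.2.1^2/2) * Real.exp (-p.2.2.2.2^2/2) with hf
  have hSm : MeasurableSet S := by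
    rw [hS]
    simp only [Set.ofPred_and]
    exact (measurableSet_le (by fun_prop) (by fun_prop)).inter
     ((measurableSet_le (by fun_prop) (by fun_prop)).inter
     ((measurableSet_le (by fun_prop) (by fun_prop)).inter
     ((measurableSet_le (by fun_prop) (by fun_prop)).inter
     (measurableSet_le (by fun_prop) (by fun_prop)))))
  have hfm : Measurable f := by rw [hf]; fun_prop
  have hf0 : ∀ p, 0 ≤ f p := fun p => by simp only [hf]; positivity
  have hl : ∫⁻ p in S, ENNReal.ofReal (f p) =
      ENNReal.ofReal (√(2 * π) * (1 / 8) * (π ^ 2 / 6 - log 2 ^ 2)) := by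
    rw [← lint_GG, ← lintegral_indicator hSm]
    refine lintegral_congr fun p => ?_
    unfold GG
    have hiff : p ∈ S ↔ (0 ≤ p.2.2.2.2 ∧ p.2.2.2.2 ≤ p.2.2.2.1 ∧ p.2.2.2.1 ≤ p.2.2.1 ∧
            p.2.2.1 ≤ p.1 ∧ p.2.2.1 ≤ p.2.1) := Iff.rfl
    by_cases h : p ∈ S
    · rw [Set.indicator_of_mem h, if_pos (hiff.1 h)]
      simp only [hf, ← Real.exp_add]
      congr 2
      ring
    · rw [Set.indicator_of_notMem h, if_neg (hiff.not.1 h)]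
  have hi : IntegrableOn f S volume := by
    refine ⟨hfm.aestronglyMeasurable, ?_⟩
    rw [hasFiniteIntegral_iff_ofReal (Filter.Eventually.of_forall hf0), hl]
    exact ENNReal.ofReal_lt_top
  refine ⟨hi, ?_⟩
  have hval : (0:ℝ) ≤ √(2 * π) * (1 / 8) * (π ^ 2 / 6 - log 2 ^ 2) := by
    have h1 := Real.log_two_lt_d9
    have h2 := Real.log_pos (one_lt_two)
    have h3 := Real.pi_gt_three
    have : 0 ≤ π ^ 2 / 6 - log 2 ^ 2 := by nlinarith
    positivity
  rw [integral_eq_lintegral_of_nonneg_ae (Filter.Eventually.of_forall hf0)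
    hfm.aestronglyMeasurable, hl, ENNReal.toReal_ofReal hval]
end
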